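/- Under the single-pinning measure μ^{ε_xδ_x} with ε_x>0, E_{μ^{ε_xδ_x}}[e^{t_x}] = 1. -/

import Mathlib

/-!
Write `W` for the conductances `β` extended by zero to non-edges, `η = ε δ_x` for the pinning, and
`H_h = diag h - W`.

Summing over spanning trees turns the tree weight into `det L(t)`, where `L(t)` is the Laplacian
with conductances `W_ij e^{t_i + t_j}` and killing rates `η_i e^{t_i}` (`matrix_tree`). The same
matrix governs the `s` variables, which are Gaussian given `t`: integrating them out contributes
`√(2π)^n / √det L(t)` (`lintegral_gauss_matrix`).

What is left is a density in `t` alone. Put `h_i = ∑_j W_ij e^{t_j - t_i} + η_i e^{-t_i}`, so that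
`u = e^t` solves `H_h u = η` and `L(t) = D H_h D` with `D = diag e^t`. This map is injective, since
`e^t = H_h⁻¹ η`, and its image is `{h | H_h positive definite}`: for such `h` the solution of
`H_h u = η` is nonnegative (an M-matrix argument), and connectivity makes it strictly positive. Its
Jacobian is `det H_h` up to sign. In the variable `h` the density becomes `stz`, namely
`exp (-½ ⟨1, H_h 1⟩ - ½ ⟨η, H_h⁻¹ η⟩ + ⟨η, 1⟩) / √det H_h`, and `e^{t_x}` becomes `(H_h⁻¹ η)_x`
(`lintegral_tExp`).

Finally the vertices are integrated out one at a time. The Schur complement `s` of all the other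
vertices splits off from the density as a reciprocal inverse Gaussian variable, and the remaining
factor is again of the form `stz` with a larger pinning; hence `stz` has mass `√(2π)^n` for every
nonnegative pinning (`lintegral_stz`). If the split-off vertex is `x`, then `(H_h⁻¹ η)_x = ε / s`,
and this factor turns the reciprocal inverse Gaussian density into the inverse Gaussian one, which
has the same mass. So the mean of `e^{t_x}` equals one (`lintegral_stz_single`).
-/

open MeasureTheory Real Filter
open scoped BigOperators

attribute [local instance] Classical.propDecidable

namespace H22

variable {V : Type*} [Fintype V] [DecidableEq V]

/-- The augmented graph `Γ_ρ`: add an extra vertex `ρ` (encoded by `none`)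
joined to every vertex of the original graph. -/
def aug (G : SimpleGraph V) : SimpleGraph (Option V) :=
  SimpleGraph.fromRel (fun a b =>
    match a, b with
    | some i, some j => G.Adj i j
    | _, _ => True)

/-- `T` is (the edge set of) a spanning tree of `G`. -/
def IsSpanningTree {α : Type*} (G : SimpleGraph α) (T : Finset (Sym2 α)) : Prop :=
  ↑T ⊆ G.edgeSet ∧ (SimpleGraph.fromEdgeSet (↑T : Set (Sym2 α))).IsTree

/-- The finset of all spanning trees of `G`. -/
noncomputable def STrees {α : Type*} [Fintype α] [DecidableEq α] (G : SimpleGraph α) :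
    Finset (Finset (Sym2 α)) :=
  Finset.univ.filter (fun T => IsSpanningTree G T)

/-- Extension of a vector `t : V → ℝ` to `Option V` by `t_ρ := 0`. -/
def extV (t : V → ℝ) : Option V → ℝ := fun a => Option.elim a 0 t

/-- Lift of a (symmetrized) function of two vertices to unordered pairs. -/
noncomputable def esym {α : Type*} (f : α → α → ℝ) : Sym2 α → ℝ :=
  Sym2.lift ⟨fun a b => (f a b + f b a) / 2, fun a b => by ring⟩

/-- Combined edge weights on the augmented graph: `β` on edges of `Γ`,
`ε_i` on the edge `i ∼ ρ`. -/
def bres (β : V → V → ℝ) (ε : V → ℝ) : Option V → Option V → ℝ := fun a b =>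
  match a, b with
  | some i, some j => β i j
  | some i, none => ε i
  | none, some j => ε j
  | none, none => 0

/-- `B_{ij}(t,s) = cosh(t_i - t_j) + ½ (s_i - s_j)² e^{t_i+t_j}` on the augmented graph. -/
noncomputable def Bfun (t s : V → ℝ) (a b : Option V) : ℝ :=
  Real.cosh (extV t a - extV t b) +
    (1 / 2) * (extV s a - extV s b) ^ 2 * Real.exp (extV t a + extV t b)

/-- Weight `β_{ij} e^{t_i+t_j}` of an edge of the augmented graph. -/
noncomputable def treeW (β : V → V → ℝ) (ε : V → ℝ) (t : V → ℝ) : Sym2 (Option V) → ℝ :=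
  esym (fun a b => bres β ε a b * Real.exp (extV t a + extV t b))

/-- Gibbs factor `e^{-β_{ij}(B_{ij}(t,s)-1)}` of an edge of the augmented graph. -/
noncomputable def gibbs (β : V → V → ℝ) (ε : V → ℝ) (t s : V → ℝ) : Sym2 (Option V) → ℝ :=
  esym (fun a b => Real.exp (-(bres β ε a b * (Bfun t s a b - 1))))

/-- The density of the measure `μ^ε` with respect to
(Lebesgue on `ℝ^V × ℝ^V`) × (counting measure on spanning trees). -/
noncomputable def dens (G : SimpleGraph V) (β : V → V → ℝ) (ε : V → ℝ)
    (t s : V → ℝ) (T : Finset (Sym2 (Option V))) : ℝ :=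
  (∏ j, Real.exp (-t j) / (2 * Real.pi)) *
  (∏ e ∈ Finset.univ.filter (fun e : Sym2 (Option V) => e ∈ (aug G).edgeSet),
      gibbs β ε t s e) *
  (∏ e ∈ T, treeW β ε t e)

/-- Expectation of an observable `f(t,s,T)` under the measure `μ^ε`. -/
noncomputable def expect (G : SimpleGraph V) (β : V → V → ℝ) (ε : V → ℝ)
    (f : (V → ℝ) → (V → ℝ) → Finset (Sym2 (Option V)) → ℝ) : ℝ :=
  ∑ T ∈ STrees (aug G), ∫ p : (V → ℝ) × (V → ℝ), dens G β ε p.1 p.2 T * f p.1 p.2 T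

/-- The weighted graph Laplacian `A(t)` of `Γ`. -/
noncomputable def Amat (G : SimpleGraph V) (β : V → V → ℝ) (t : V → ℝ) : Matrix V V ℝ :=
  Matrix.of fun i j =>
    if i = j then ∑ k ∈ Finset.univ.filter (fun k => G.Adj k j), β k j * Real.exp (t k + t j)
    else if G.Adj i j then -(β i j * Real.exp (t i + t j)) else 0

/-- The pinning diagonal matrix `ε̂(t) = diag(ε_i e^{t_i})`. -/
noncomputable def epsHat (ε : V → ℝ) (t : V → ℝ) : Matrix V V ℝ :=
  Matrix.diagonal fun i => ε i * Real.exp (t i)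

/-- The Green's function `G^ε_{xy} = e^{t_x+t_y} (A(t)+ε̂(t))⁻¹_{xy}`. -/
noncomputable def Gfun (G : SimpleGraph V) (β : V → V → ℝ) (ε : V → ℝ)
    (t : V → ℝ) (x y : V) : ℝ :=
  Real.exp (t x + t y) * (Amat G β t + epsHat ε t)⁻¹ x y

/-- The edge `i ∼ ρ` of the augmented graph. -/
def rootEdge (i : V) : Sym2 (Option V) := s(some i, none)

/-- The set of roots `R(T) = {i ∈ V : (i ∼ ρ) ∈ T}`. -/
noncomputable def roots (T : Finset (Sym2 (Option V))) : Finset V :=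
  Finset.univ.filter fun i => rootEdge i ∈ T

/-- The forest `F(T) = T ∩ E`: edges of `T` not incident to `ρ`. -/
noncomputable def forestOf (T : Finset (Sym2 (Option V))) : Finset (Sym2 (Option V)) :=
  T.filter fun e => ¬ ((none : Option V) ∈ e)

/-- `x ↔_T y`: `x` and `y` are connected in `T` through a path not using `ρ`. -/
def connIn (T : Finset (Sym2 (Option V))) (x y : V) : Prop :=
  (SimpleGraph.fromEdgeSet (↑(forestOf T) : Set (Sym2 (Option V)))).Reachable (some x) (some y)

/-- The observable `O^π_{xy}`. -/
noncomputable def obs (pv : V → ℝ) (x y : V) (t : V → ℝ)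
    (T : Finset (Sym2 (Option V))) : ℝ :=
  Real.exp (t x + t y) / (pv x * Real.exp (t x) + pv y * Real.exp (t y)) *
    (if rootEdge x ∈ T ∧ connIn T x y then 1 else 0)

/-- The pinning `ε = (π_i ε)_{i ∈ V}`. -/
def pinOf (pv : V → ℝ) (ε : ℝ) : V → ℝ := fun i => pv i * ε

/-- The pinning `c δ_x` concentrated at the single vertex `x`. -/
def singlePin (x : V) (c : ℝ) : V → ℝ := fun i => if i = x then c else 0

end H22

/-! ### The matrix-tree theorem via rooted parent maps -/

namespace H22

section MatrixTree

variable {V : Type*} [Fintype V] [DecidableEq V]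

/-- A parent map `f : V → V ∪ {ρ}` (with `ρ = none`) is rooted when following parents always ends
at `ρ`; equivalently, the relation "`j` is the parent of `i`" is well founded. -/
def Rooted (f : V → Option V) : Prop := WellFounded (fun j i : V => f i = some j)

/-- The matrix `I - P_f`, where `P_f` is the transition matrix of the parent map `f`. -/
def parentMat (f : V → Option V) : Matrix V V ℝ :=
  Matrix.of fun i j => (if i = j then 1 else 0) - (if f i = some j then 1 else 0)

omit [Fintype V] [DecidableEq V] in
lemma Rooted.ne {f : V → Option V} (hf : Rooted f) (i : V) : f i ≠ some i := fun h =>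
  hf.irrefl.irrefl i h

/-- Ordering the vertices by the rank of the parent relation makes `I - P_f` triangular with unit
diagonal. -/
lemma det_parentMat_of_rooted {f : V → Option V} (hf : Rooted f) : (parentMat f).det = 1 := by
  have : IsWellFounded V (fun j i : V => f i = some j) := ⟨hf⟩
  let b : V → (Ordinal)ᵒᵈ := fun i =>
    OrderDual.toDual (IsWellFounded.rank (fun j i : V => f i = some j) i)
  have hb : (parentMat f).BlockTriangular b := by
    intro i j hij
    have h1 : i ≠ j := by rintro rfl; exact lt_irrefl _ hij
    have h2 : f i ≠ some j := fun h => by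
      have : b i < b j := IsWellFounded.rank_lt_of_rel (r := (fun j i : V => f i = some j)) h
      exact lt_asymm hij this
    simp [parentMat, h1, h2]
  rw [hb.det]
  refine Finset.prod_eq_one fun a _ => ?_
  have : (parentMat f).toSquareBlock b a = 1 := by
    ext ⟨i, hi⟩ ⟨j, hj⟩
    have h2 : f i ≠ some j := fun h => by
      have : b i < b j := IsWellFounded.rank_lt_of_rel (r := (fun j i : V => f i = some j)) h
      rw [hi, hj] at this
      exact lt_irrefl _ this
    simp [Matrix.toSquareBlock_def, parentMat, h2, Matrix.one_apply]
  rw [this, Matrix.det_one]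

/-- If some vertex never reaches `ρ`, the indicator of all such vertices lies in the kernel. -/
lemma det_parentMat_of_not_rooted {f : V → Option V} (hf : ¬ Rooted f) :
    (parentMat f).det = 0 := by
  classical
  obtain ⟨i₀, h₀⟩ : ∃ i, ¬ Acc (fun j i : V => f i = some j) i := by
    by_contra! h
    exact hf ⟨h⟩
  refine Matrix.exists_mulVec_eq_zero_iff.mp
    ⟨fun i => if Acc (fun j i : V => f i = some j) i then 0 else 1, ?_, ?_⟩
  · intro h
    have := congrFun h i₀
    simp [h₀] at this
  · funext i
    simp only [Matrix.mulVec, dotProduct, parentMat, Matrix.of_apply, sub_mul, ite_mul, one_mul,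
      zero_mul, Finset.sum_sub_distrib, Finset.sum_ite_eq, Finset.mem_univ, if_true, Pi.zero_apply]
    rcases hfi : f i with _ | j
    · have : Acc (fun j i : V => f i = some j) i := ⟨_, fun j hj => by simp [hfi] at hj⟩
      simp [this]
    · have : Acc (fun j i : V => f i = some j) i ↔ Acc (fun j i : V => f i = some j) j := by
        refine ⟨fun h => h.inv hfi, fun h => ⟨_, fun k hk => ?_⟩⟩
        rw [hfi] at hk
        cases hk
        exact h
      simp [this]

/-- The Laplacian of the weights `w`, grounded at `ρ`. -/
def groundedLap (w : V → Option V → ℝ) : Matrix V V ℝ :=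
  Matrix.of fun i j => (if i = j then ∑ a, w i a else 0) - w i (some j)

/-- Multilinearity in the rows: row `i` of the Laplacian is the `w i a`-weighted sum over the
possible parents `a` of the rows of `I - P_f`. -/
lemma det_groundedLap (w : V → Option V → ℝ) :
    (groundedLap w).det = ∑ f : V → Option V with Rooted f, ∏ i, w i (f i) := by
  have h1 : groundedLap w = fun i => ∑ a, w i a •
      (fun j => (if i = j then 1 else 0) - (if a = some j then (1 : ℝ) else 0)) := by
    funext i j
    simp only [groundedLap, Matrix.of_apply, Finset.sum_apply, Pi.smul_apply, smul_eq_mul, mul_sub,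
      Finset.sum_sub_distrib, mul_ite, mul_one, mul_zero, Finset.sum_ite_eq', Finset.mem_univ,
      if_true]
    split_ifs <;> simp
  have h2 : (groundedLap w).det = Matrix.detRowAlternating (groundedLap w) := rfl
  rw [h2, h1]
  erw [MultilinearMap.map_sum]
  rw [Finset.sum_filter]
  refine Finset.sum_congr rfl fun f _ => ?_
  erw [MultilinearMap.map_smul_univ]
  have h3 : (Matrix.detRowAlternating.toMultilinearMap fun i j =>
      (if i = j then 1 else 0) - (if f i = some j then (1 : ℝ) else 0)) = (parentMat f).det := rfl
  rw [smul_eq_mul, h3]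
  split_ifs with h
  · rw [det_parentMat_of_rooted h, mul_one]
  · rw [det_parentMat_of_not_rooted h, mul_zero]

/-- The edge set of the tree encoded by a parent map. -/
def parentEdges (f : V → Option V) : Finset (Sym2 (Option V)) :=
  Finset.univ.image fun i => s(some i, f i)

omit [Fintype V] [DecidableEq V] in
lemma Rooted.edge_injective {f : V → Option V} (hf : Rooted f) :
    Function.Injective fun i => s(some i, f i) := by
  intro i j hij
  simp only [Sym2.eq_iff, Option.some.injEq] at hij
  rcases hij with h | ⟨h1, h2⟩
  · exact h.1
  · exact absurd h2 (fun h => hf.asymmetric _ _ h h1.symm)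

lemma Rooted.parentEdges_isTree {f : V → Option V} (hf : Rooted f) :
    (SimpleGraph.fromEdgeSet (parentEdges f : Set (Sym2 (Option V)))).IsTree := by
  classical
  have hnd : ∀ i, some i ≠ f i := fun i h => hf.ne i h.symm
  have hadj : ∀ i, (SimpleGraph.fromEdgeSet (parentEdges f : Set (Sym2 (Option V)))).Adj
      (some i) (f i) := fun i => by
    rw [SimpleGraph.fromEdgeSet_adj]
    exact ⟨Finset.mem_coe.2 (Finset.mem_image_of_mem _ (Finset.mem_univ i)), hnd i⟩
  rw [SimpleGraph.isTree_iff_connected_and_card]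
  constructor
  · have hr : ∀ a, (SimpleGraph.fromEdgeSet (parentEdges f : Set (Sym2 (Option V)))).Reachable
        a none := by
      intro a
      rcases a with _ | i
      · rfl
      · induction i using hf.induction with
        | _ i ih =>
          rcases h : f i with _ | j
          · have := (hadj i).reachable
            rwa [h] at this
          · have := (hadj i).reachable
            rw [h] at this
            exact this.trans (ih j h)
    exact ⟨fun a b => (hr a).trans (hr b).symm⟩
  · have : (SimpleGraph.fromEdgeSet (parentEdges f : Set (Sym2 (Option V)))).edgeSet =
        (parentEdges f : Set (Sym2 (Option V))) := by
      rw [SimpleGraph.edgeSet_fromEdgeSet, sdiff_eq_left, Set.disjoint_left]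
      intro e he hd
      simp only [parentEdges, Finset.coe_image, Finset.coe_univ, Set.image_univ,
        Set.mem_range] at he
      obtain ⟨i, rfl⟩ := he
      simp at hd
      exact hnd i hd
    rw [this]
    simp only [Nat.card_eq_fintype_card, Fintype.card_option]
    have h2 : Fintype.card (↑(parentEdges f : Set (Sym2 (Option V)))) = (parentEdges f).card :=
      Fintype.card_coe _
    rw [h2, parentEdges, Finset.card_image_of_injective _ hf.edge_injective, Finset.card_univ]

lemma Rooted.eq_of_parentEdges_eq {f g : V → Option V} (hf : Rooted f)
    (h : parentEdges f = parentEdges g) : f = g := by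
  funext i
  induction i using hf.induction with
  | _ i ih =>
    have : s(some i, f i) ∈ parentEdges g := by
      rw [← h]
      exact Finset.mem_image_of_mem _ (Finset.mem_univ i)
    simp only [parentEdges, Finset.mem_image, Finset.mem_univ, true_and, Sym2.eq_iff,
      Option.some.injEq] at this
    obtain ⟨j, ⟨rfl, h2⟩ | ⟨h1, h2⟩⟩ := this
    · exact h2.symm
    · have := ih j h1.symm
      rw [h2] at this
      exact absurd h1.symm (fun h => hf.asymmetric _ _ h this)

/-- In a spanning tree of `V ∪ {ρ}`, sending each vertex to its neighbour closer to `ρ` gives a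
rooted parent map with the same edge set. -/
lemma exists_rooted_of_isTree {T : Finset (Sym2 (Option V))}
    (hT : (SimpleGraph.fromEdgeSet (T : Set (Sym2 (Option V)))).IsTree)
    (hd : ∀ e ∈ T, ¬ e.IsDiag) :
    ∃ f : V → Option V, Rooted f ∧ parentEdges f = T := by
  classical
  set G := SimpleGraph.fromEdgeSet (T : Set (Sym2 (Option V))) with hG
  have key : ∀ i : V, ∃ a, G.Adj (some i) a ∧ G.dist a none < G.dist (some i) none := by
    intro i
    obtain ⟨p, hp⟩ := (hT.connected (some i) none).exists_walk_length_eq_dist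
    cases p with
    | cons hadj q =>
      refine ⟨_, hadj, ?_⟩
      rw [← hp, SimpleGraph.Walk.length_cons]
      exact Nat.lt_succ_of_le (SimpleGraph.dist_le q)
  choose f hadj hdist using key
  have hf : Rooted f := by
    refine Subrelation.wf (r := InvImage (· < ·) fun i : V => G.dist (some i) none) ?_
      (InvImage.wf _ wellFounded_lt)
    intro j i hji
    have := hdist i
    rw [hji] at this
    exact this
  -- Both edge sets have `|V|` elements, so one inclusion suffices.
  refine ⟨f, hf, Finset.eq_of_subset_of_card_le ?_ ?_⟩
  · intro e he
    simp only [parentEdges, Finset.mem_image, Finset.mem_univ, true_and] at he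
    obtain ⟨i, rfl⟩ := he
    have := hadj i
    rw [hG, SimpleGraph.fromEdgeSet_adj] at this
    exact this.1
  · have h1 := (SimpleGraph.isTree_iff_connected_and_card.mp hT).2
    have : G.edgeSet = (T : Set (Sym2 (Option V))) := by
      rw [hG, SimpleGraph.edgeSet_fromEdgeSet, sdiff_eq_left, Set.disjoint_left]
      intro e he hd'
      exact hd e he hd'
    rw [this] at h1
    simp only [Nat.card_eq_fintype_card, Fintype.card_option] at h1
    rw [parentEdges, Finset.card_image_of_injective _ hf.edge_injective, Finset.card_univ]
    have h2 : Fintype.card (↑(T : Set (Sym2 (Option V)))) = T.card := Fintype.card_coe T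
    omega

lemma mem_STrees {α : Type*} [Fintype α] [DecidableEq α] {G : SimpleGraph α}
    {T : Finset (Sym2 α)} : T ∈ STrees G ↔ IsSpanningTree G T := by
  unfold STrees
  rw [Finset.mem_filter]
  exact and_iff_right (Finset.mem_univ _)

/-- **Matrix-tree theorem** for edge weights `ω` supported on the edges of `G`. -/
theorem matrix_tree (G : SimpleGraph (Option V)) (ω : Sym2 (Option V) → ℝ)
    (hω : ∀ e ∉ G.edgeSet, ω e = 0) :
    ∑ T ∈ STrees G, ∏ e ∈ T, ω e = (groundedLap fun i a => ω s(some i, a)).det := by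
  classical
  rw [det_groundedLap]
  symm
  -- Parent maps using a non-edge contribute zero; the remaining ones biject with spanning trees.
  have h0 : ∑ f : V → Option V with Rooted f, ∏ i, ω s(some i, f i) =
      ∑ f : V → Option V with Rooted f ∧ ∀ i, s(some i, f i) ∈ G.edgeSet,
        ∏ i, ω s(some i, f i) := by
    symm
    refine Finset.sum_subset_zero_on_sdiff ?_ ?_ (fun _ _ => rfl)
    · intro f hf
      simp only [Finset.mem_filter, Finset.mem_univ, true_and] at hf ⊢
      exact hf.1
    · intro f hf
      simp only [Finset.mem_sdiff, Finset.mem_filter, Finset.mem_univ, true_and, not_and,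
        not_forall] at hf
      obtain ⟨i, hi⟩ := hf.2 hf.1
      exact Finset.prod_eq_zero (Finset.mem_univ i) (hω _ hi)
  rw [h0]
  refine Finset.sum_bij (fun f _ => parentEdges f) ?_ ?_ ?_ ?_
  · intro f hf
    simp only [Finset.mem_filter, Finset.mem_univ, true_and] at hf
    rw [mem_STrees]
    refine ⟨?_, hf.1.parentEdges_isTree⟩
    intro e he
    simp only [parentEdges, Finset.coe_image, Finset.coe_univ, Set.image_univ,
        Set.mem_range] at he
    obtain ⟨i, rfl⟩ := he
    exact hf.2 i
  · intro f hf g hg h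
    simp only [Finset.mem_filter, Finset.mem_univ, true_and] at hf
    exact hf.1.eq_of_parentEdges_eq h
  · intro T hT
    rw [mem_STrees] at hT
    obtain ⟨f, hf, rfl⟩ := exists_rooted_of_isTree hT.2
      (fun e he => G.not_isDiag_of_mem_edgeSet (hT.1 he))
    refine ⟨f, ?_, rfl⟩
    simp only [Finset.mem_filter, Finset.mem_univ, true_and]
    exact ⟨hf, fun i => hT.1 (Finset.mem_coe.2 (Finset.mem_image_of_mem _ (Finset.mem_univ i)))⟩
  · intro f hf
    simp only [Finset.mem_filter, Finset.mem_univ, true_and] at hf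
    rw [parentEdges, Finset.prod_image]
    exact fun i _ j _ h => hf.1.edge_injective h

end MatrixTree

end H22

/-! ### Inverse Gaussian integrals -/

namespace H22

section OneDim

lemma lintegral_gauss : ∫⁻ y : ℝ, ENNReal.ofReal (Real.exp (-(y ^ 2 / 2))) =
    ENNReal.ofReal √(2 * π) := by
  have h : (fun y : ℝ => Real.exp (-(y ^ 2 / 2))) = fun y => Real.exp (-(1 / 2) * y ^ 2) := by
    funext y
    ring_nf
  simp_rw [congrFun h]
  rw [← ofReal_integral_eq_lintegral_ofReal (integrable_exp_neg_mul_sq (by norm_num))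
    (ae_of_all _ fun _ => (Real.exp_pos _).le), integral_gaussian]
  congr 2
  ring

/-- The exponential substitution `s = c eʳ`. -/
lemma lintegral_Ioi_eq_exp {c : ℝ} (hc : 0 < c) (g : ℝ → ENNReal) :
    ∫⁻ s in Set.Ioi 0, g s = ∫⁻ r : ℝ, ENNReal.ofReal (c * Real.exp r) * g (c * Real.exp r) := by
  have himg : (fun r : ℝ => c * Real.exp r) '' Set.univ = Set.Ioi 0 := by
    ext s
    simp only [Set.image_univ, Set.mem_range, Set.mem_Ioi]
    constructor
    · rintro ⟨r, rfl⟩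
      positivity
    · intro hs
      refine ⟨Real.log (s / c), ?_⟩
      rw [Real.exp_log (by positivity)]
      field_simp
  rw [← himg, lintegral_image_eq_lintegral_abs_deriv_mul (f' := fun r => c * Real.exp r)
    MeasurableSet.univ (fun r _ => ((Real.hasDerivAt_exp r).const_mul c).hasDerivWithinAt)]
  · simp only [Measure.restrict_univ]
    refine lintegral_congr fun r => ?_
    rw [abs_of_pos (by positivity)]
  · intro a _ b _ h
    exact Real.exp_injective (mul_left_cancel₀ hc.ne' h)

/-- With `s = c eʳ` the density of `invGauss_fst` becomes this one; symmetrizing in `r` turns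
`e^{r/2}` into `cosh (r/2)`, and `y = 2 √c sinh (r/2)` is then Gaussian. -/
lemma lintegral_sinh_aux {c : ℝ} (hc : 0 < c) :
    ∫⁻ r : ℝ, ENNReal.ofReal (√c * Real.exp (r / 2) * Real.exp (-c * (Real.cosh r - 1))) =
      ENNReal.ofReal √(2 * π) := by
  set J := ∫⁻ r : ℝ, ENNReal.ofReal (√c * Real.exp (r / 2) * Real.exp (-c * (Real.cosh r - 1)))
    with hJ
  have hneg : J = ∫⁻ r : ℝ,
      ENNReal.ofReal (√c * Real.exp (-(r / 2)) * Real.exp (-c * (Real.cosh r - 1))) := by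
    rw [hJ, ← lintegral_neg_eq_self]
    refine lintegral_congr fun r => ?_
    rw [Real.cosh_neg, neg_div]
  have hsq : 0 < √c := Real.sqrt_pos.2 hc
  have hadd : J + J = 2 * ENNReal.ofReal √(2 * π) := by
    nth_rewrite 2 [hneg]
    rw [hJ, ← lintegral_add_left (by fun_prop), ← lintegral_gauss]
    have himg : (fun r : ℝ => 2 * √c * Real.sinh (r / 2)) '' Set.univ = Set.univ := by
      rw [Set.image_univ, Set.range_eq_univ]
      intro y
      obtain ⟨r, hr⟩ := Real.sinh_surjective (y / (2 * √c))
      refine ⟨2 * r, ?_⟩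
      simp only [mul_div_cancel_left₀ r (two_ne_zero), hr]
      field_simp
    have hder : ∀ r ∈ (Set.univ : Set ℝ), HasDerivWithinAt
        (fun r : ℝ => 2 * √c * Real.sinh (r / 2)) (√c * Real.cosh (r / 2)) Set.univ r := by
      intro r _
      have h1 : HasDerivAt (fun r : ℝ => r / 2) (1 / 2) r := (hasDerivAt_id r).div_const 2
      have := (h1.sinh).const_mul (2 * √c)
      refine (this.congr_deriv ?_).hasDerivWithinAt
      ring
    have hinj : Set.InjOn (fun r : ℝ => 2 * √c * Real.sinh (r / 2)) Set.univ := by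
      intro a _ b _ h
      have := Real.sinh_injective (mul_left_cancel₀ (by positivity : 2 * √c ≠ 0) h)
      linarith
    have hcov := lintegral_image_eq_lintegral_abs_deriv_mul MeasurableSet.univ hder hinj
      (fun y => ENNReal.ofReal (Real.exp (-(y ^ 2 / 2))))
    rw [himg] at hcov
    simp only [Measure.restrict_univ] at hcov
    rw [hcov, ← lintegral_const_mul' _ _ (by simp)]
    refine lintegral_congr fun r => ?_
    have hpos := Real.cosh_pos (r / 2)
    rw [← ENNReal.ofReal_add (by positivity) (by positivity), abs_of_pos (by positivity),
      ← ENNReal.ofReal_mul (by positivity),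
      show (2 : ENNReal) = ENNReal.ofReal 2 by simp, ← ENNReal.ofReal_mul (by norm_num)]
    congr 1
    have e1 : -c * (Real.cosh r - 1) = -((2 * √c * Real.sinh (r / 2)) ^ 2 / 2) := by
      have : Real.cosh r = 1 + 2 * Real.sinh (r / 2) ^ 2 := by
        have := Real.cosh_two_mul (r / 2)
        rw [mul_div_cancel₀ r (two_ne_zero)] at this
        rw [this, Real.cosh_sq]
        ring
      rw [this, mul_pow, mul_pow, Real.sq_sqrt hc.le]
      ring
    rw [e1, Real.cosh_eq]
    ring
  have : (2 : ENNReal) * J = 2 * ENNReal.ofReal √(2 * π) := by rw [← hadd, two_mul]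
  exact (ENNReal.mul_right_inj (by simp) (by simp)).1 this

lemma invGauss_exponent {c : ℝ} (hc : 0 < c) (r : ℝ) :
    -(c * Real.exp r) / 2 - c ^ 2 / (2 * (c * Real.exp r)) + c = -c * (Real.cosh r - 1) := by
  rw [Real.cosh_eq, Real.exp_neg]
  have := Real.exp_pos r
  field_simp
  ring

/-- The reciprocal inverse Gaussian density (times `√(2π)`) has total mass `√(2π)`; for `c = 0` it is
a Gamma density. -/
lemma invGauss_fst {c : ℝ} (hc : 0 ≤ c) :
    ∫⁻ s in Set.Ioi 0, ENNReal.ofReal (Real.exp (-s / 2 - c ^ 2 / (2 * s) + c) / √s) =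
      ENNReal.ofReal √(2 * π) := by
  rcases hc.eq_or_lt with rfl | hc
  · have hg := ProbabilityTheory.lintegral_gammaPDF_eq_one (a := 1 / 2) (r := 1 / 2)
      (by norm_num) (by norm_num)
    have h1 : ∀ s : ℝ, s ∈ Set.Ioi (0 : ℝ) →
        ENNReal.ofReal (Real.exp (-s / 2 - 0 ^ 2 / (2 * s) + 0) / √s) =
        ENNReal.ofReal √(2 * π) * ProbabilityTheory.gammaPDF (1 / 2) (1 / 2) s := by
      intro s hs
      have hs' : (0 : ℝ) < s := hs
      rw [ProbabilityTheory.gammaPDF_of_nonneg hs'.le, ← ENNReal.ofReal_mul (by positivity)]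
      congr 1
      rw [Real.Gamma_one_half_eq, ← Real.sqrt_eq_rpow, show (1 / 2 - 1 : ℝ) = -(1 / 2) by norm_num,
        Real.rpow_neg hs'.le, ← Real.sqrt_eq_rpow, Real.sqrt_mul (by norm_num),
        Real.sqrt_div (by norm_num)]
      have h3 : √π ≠ 0 := by positivity
      have h4 : √2 ≠ 0 := by positivity
      have h5 : √s ≠ 0 := by positivity
      simp only [Real.sqrt_one]
      have h6 : -s / 2 - 0 ^ 2 / (2 * s) + 0 = -(1 / 2 * s) := by ring
      rw [h6]
      field_simp
    rw [setLIntegral_congr_fun measurableSet_Ioi h1, lintegral_const_mul' _ _ ENNReal.ofReal_ne_top,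
      ← lintegral_indicator measurableSet_Ioi]
    have h2 : ∫⁻ s, (Set.Ioi (0 : ℝ)).indicator (ProbabilityTheory.gammaPDF (1 / 2) (1 / 2)) s =
        ∫⁻ s, ProbabilityTheory.gammaPDF (1 / 2) (1 / 2) s := by
      refine lintegral_congr_ae ?_
      have h0 : ∀ᵐ s : ℝ, s ≠ 0 := by
        simp [ae_iff]
      filter_upwards [h0] with s hs
      by_cases hs' : 0 < s
      · rw [Set.indicator_of_mem (Set.mem_Ioi.2 hs')]
      · rw [Set.indicator_of_notMem (by simpa using hs'),
          ProbabilityTheory.gammaPDF_of_neg (lt_of_le_of_ne (not_lt.1 hs') hs)]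
    have h3 : ∫⁻ s, (Set.Ioi (0 : ℝ)).indicator
        (fun s => ProbabilityTheory.gammaPDF (1 / 2) (1 / 2) s) s = 1 := h2.trans hg
    rw [h3, mul_one]
  · rw [lintegral_Ioi_eq_exp hc, ← lintegral_sinh_aux hc]
    refine lintegral_congr fun r => ?_
    rw [← ENNReal.ofReal_mul (by positivity), invGauss_exponent hc, Real.sqrt_mul hc.le,
      ← Real.exp_half]
    congr 1
    have h1 : c = √c * √c := (Real.mul_self_sqrt hc.le).symm
    have h2 : Real.exp r = Real.exp (r / 2) * Real.exp (r / 2) := by rw [← Real.exp_add]; ring_nf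
    have h3 : √c ≠ 0 := by positivity
    have h4 := (Real.exp_pos (r / 2)).ne'
    rw [h2, mul_div_assoc', div_eq_iff (by positivity)]
    nth_rewrite 1 [h1]
    ring

/-- The inverse Gaussian density (times `√(2π)`) has total mass `√(2π)`. -/
lemma invGauss_snd {c : ℝ} (hc : 0 < c) :
    ∫⁻ s in Set.Ioi 0, ENNReal.ofReal (Real.exp (-s / 2 - c ^ 2 / (2 * s) + c) / √s * (c / s)) =
      ENNReal.ofReal √(2 * π) := by
  rw [lintegral_Ioi_eq_exp hc, ← lintegral_sinh_aux hc, ← lintegral_neg_eq_self]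
  refine lintegral_congr fun r => ?_
  rw [← ENNReal.ofReal_mul (by positivity), invGauss_exponent hc, Real.sqrt_mul hc.le,
    ← Real.exp_half, Real.cosh_neg, Real.exp_neg, neg_div, Real.exp_neg]
  congr 1
  have h1 : c = √c * √c := (Real.mul_self_sqrt hc.le).symm
  have h2 : Real.exp r = Real.exp (r / 2) * Real.exp (r / 2) := by rw [← Real.exp_add]; ring_nf
  have h3 : √c ≠ 0 := by positivity
  have h4 := (Real.exp_pos (r / 2)).ne'
  rw [h2]
  field_simp
  rw [Real.sq_sqrt hc.le]

end OneDim

end H22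

/-! ### Schur complements and M-matrices -/

namespace H22

section Schur

open Matrix

variable {κ : Type*} [Fintype κ] [DecidableEq κ]

/-- The Schur complement of the block `κ` in a matrix over `Option κ`. -/
noncomputable def schur (H : Matrix (Option κ) (Option κ) ℝ) : ℝ :=
  H none none - (fun i => H none (some i)) ⬝ᵥ
    ((H.submatrix some some)⁻¹ *ᵥ fun i => H none (some i))

omit [Fintype κ] [DecidableEq κ] in
lemma submatrix_option_eq_fromBlocks {H : Matrix (Option κ) (Option κ) ℝ} (hH : H.IsSymm) :
    H.submatrix (Equiv.optionEquivSumPUnit.{0} κ).symm (Equiv.optionEquivSumPUnit.{0} κ).symm =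
      fromBlocks (H.submatrix some some) (of fun i (_ : Unit) => H none (some i))
        (of fun i (_ : Unit) => H none (some i))ᴴ (of fun (_ _ : Unit) => H none none) := by
  ext i j
  rcases i with i | i <;> rcases j with j | j <;> simp [hH.apply]

lemma schur_block_eq (H : Matrix (Option κ) (Option κ) ℝ) :
    (of fun (_ _ : Unit) => H none none) - (of fun i (_ : Unit) => H none (some i))ᴴ *
      (H.submatrix some some)⁻¹ * (of fun i (_ : Unit) => H none (some i)) =
      diagonal fun _ => schur H := by
  ext i j
  rw [Matrix.mul_assoc]
  simp [schur, Matrix.mul_apply, dotProduct, mulVec]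

lemma det_option {H : Matrix (Option κ) (Option κ) ℝ} (hH : H.IsSymm)
    (h1 : (H.submatrix some some).PosDef) :
    H.det = (H.submatrix some some).det * schur H := by
  have : Invertible (H.submatrix some some) := h1.isUnit.invertible
  rw [← det_submatrix_equiv_self (Equiv.optionEquivSumPUnit.{0} κ).symm H,
    submatrix_option_eq_fromBlocks hH, det_fromBlocks₁₁, invOf_eq_nonsing_inv, schur_block_eq]
  simp

lemma posDef_option {H : Matrix (Option κ) (Option κ) ℝ} (hH : H.IsSymm) :
    H.PosDef ↔ (H.submatrix some some).PosDef ∧ 0 < schur H := by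
  constructor
  · intro h
    have h1 : (H.submatrix some some).PosDef := h.submatrix (Option.some_injective κ)
    refine ⟨h1, ?_⟩
    have h2 := h.det_pos
    rw [det_option hH h1] at h2
    exact (mul_pos_iff_of_pos_left h1.det_pos).1 h2
  · rintro ⟨h1, h2⟩
    have : Invertible (H.submatrix some some) := h1.isUnit.invertible
    have h3 : H.PosSemidef := by
      rw [← posSemidef_submatrix_equiv (Equiv.optionEquivSumPUnit.{0} κ).symm,
        submatrix_option_eq_fromBlocks hH, PosDef.fromBlocks₁₁ _ _ h1, schur_block_eq]
      exact PosSemidef.diagonal fun _ => h2.le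
    rw [h3.posDef_iff_det_ne_zero, det_option hH h1]
    exact (mul_pos h1.det_pos h2).ne'

/-- Block elimination for the linear system `H u = η`. -/
lemma inv_mulVec_option {H : Matrix (Option κ) (Option κ) ℝ} (hH : H.IsSymm) (hP : H.PosDef)
    (η : Option κ → ℝ) (c : ℝ)
    (hc : c = η none - (fun i => H none (some i)) ⬝ᵥ
      ((H.submatrix some some)⁻¹ *ᵥ fun i => η (some i))) :
    H⁻¹ *ᵥ η = fun o => o.elim (c / schur H) fun i =>
      ((H.submatrix some some)⁻¹ *ᵥ fun i => η (some i)) i -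
        c / schur H * ((H.submatrix some some)⁻¹ *ᵥ fun i => H none (some i)) i := by
  obtain ⟨h1, h2⟩ := (posDef_option hH).1 hP
  set u : Option κ → ℝ := fun o => o.elim (c / schur H) fun i =>
      ((H.submatrix some some)⁻¹ *ᵥ fun i => η (some i)) i -
        c / schur H * ((H.submatrix some some)⁻¹ *ᵥ fun i => H none (some i)) i with hu
  have hu1 : (fun i => u (some i)) = ((H.submatrix some some)⁻¹ *ᵥ fun i => η (some i)) -
      (c / schur H) • ((H.submatrix some some)⁻¹ *ᵥ fun i => H none (some i)) := by
    funext i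
    simp [hu]
  have hcan : ∀ v : κ → ℝ, H.submatrix some some *ᵥ ((H.submatrix some some)⁻¹ *ᵥ v) = v := by
    intro v
    rw [mulVec_mulVec, mul_nonsing_inv _ ((isUnit_iff_isUnit_det _).1 h1.isUnit), one_mulVec]
  suffices h : H *ᵥ u = η by
    rw [← h, mulVec_mulVec, nonsing_inv_mul _ ((isUnit_iff_isUnit_det _).1 hP.isUnit), one_mulVec]
  funext o
  rcases o with _ | i
  · have e1 : (H *ᵥ u) none = H none none * (c / schur H) +
        (fun i => H none (some i)) ⬝ᵥ (fun i => u (some i)) := by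
      simp [mulVec, dotProduct, Fintype.sum_option, hu]
    rw [e1, hu1, dotProduct_sub, dotProduct_smul, smul_eq_mul]
    have e2 : (fun i => H none (some i)) ⬝ᵥ
        ((H.submatrix some some)⁻¹ *ᵥ fun i => H none (some i)) = H none none - schur H := by
      simp [schur]
    have e3 : c / schur H * schur H = c := div_mul_cancel₀ _ h2.ne'
    rw [e2]
    linear_combination e3 + hc
  · have e1 : (H *ᵥ u) (some i) = H none (some i) * (c / schur H) +
        (H.submatrix some some *ᵥ (fun i => u (some i))) i := by
      simp [mulVec, dotProduct, Fintype.sum_option, hu, hH.apply]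
    rw [e1, hu1, mulVec_sub, mulVec_smul, hcan, hcan]
    simp
    ring

lemma dotProduct_inv_option {H : Matrix (Option κ) (Option κ) ℝ} (hH : H.IsSymm) (hP : H.PosDef)
    (η : Option κ → ℝ) (c : ℝ)
    (hc : c = η none - (fun i => H none (some i)) ⬝ᵥ
      ((H.submatrix some some)⁻¹ *ᵥ fun i => η (some i))) :
    η ⬝ᵥ (H⁻¹ *ᵥ η) = (fun i => η (some i)) ⬝ᵥ
      ((H.submatrix some some)⁻¹ *ᵥ fun i => η (some i)) + c ^ 2 / schur H := by
  obtain ⟨h1, h2⟩ := (posDef_option hH).1 hP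
  rw [inv_mulVec_option hH hP η c hc]
  have hs : (H.submatrix some some)⁻¹.IsSymm := (hH.submatrix some).inv
  have e1 : ∀ v : Option κ → ℝ, η ⬝ᵥ v = η none * v none +
      (fun i => η (some i)) ⬝ᵥ (fun i => v (some i)) := fun v => by
    simp [dotProduct, Fintype.sum_option]
  have e2 : (fun i => η (some i)) ⬝ᵥ ((H.submatrix some some)⁻¹ *ᵥ fun i => H none (some i)) =
      (fun i => H none (some i)) ⬝ᵥ ((H.submatrix some some)⁻¹ *ᵥ fun i => η (some i)) := by
    rw [dotProduct_mulVec, ← mulVec_transpose, hs.eq, dotProduct_comm]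
  rw [e1]
  simp only [Option.elim]
  have e3 : (fun i => ((H.submatrix some some)⁻¹ *ᵥ fun i => η (some i)) i -
        c / schur H * ((H.submatrix some some)⁻¹ *ᵥ fun i => H none (some i)) i) =
      ((H.submatrix some some)⁻¹ *ᵥ fun i => η (some i)) -
      (c / schur H) • ((H.submatrix some some)⁻¹ *ᵥ fun i => H none (some i)) := rfl
  rw [e3, dotProduct_sub, dotProduct_smul, smul_eq_mul, e2]
  have e4 : c ^ 2 / schur H = c / schur H * c := by ring
  rw [e4]
  linear_combination (-(c / schur H)) * hc

end Schur

section MMatrix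

open Matrix

variable {ι : Type*} [Fintype ι] [DecidableEq ι]

/-- The matrix `H_h = diag h - W`. -/
def potMat (W : ι → ι → ℝ) (h : ι → ℝ) : Matrix ι ι ℝ :=
  Matrix.of fun i j => (if i = j then h i else 0) - W i j

omit [Fintype ι] in
lemma potMat_isSymm {W : ι → ι → ℝ} (hW : ∀ i j, W i j = W j i) (h : ι → ℝ) :
    (potMat W h).IsSymm := by
  ext i j
  by_cases hij : i = j
  · simp [potMat, hij]
  · simp [potMat, hij, Ne.symm hij, hW i j]

/-- Positive definite matrices with nonpositive off-diagonal entries are inverse-nonnegative: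
the negative part `m` of the solution satisfies `mᵀ H m ≤ 0`. -/
lemma inv_mulVec_nonneg {W : ι → ι → ℝ} (hW0 : ∀ i j, 0 ≤ W i j) {h : ι → ℝ}
    (hP : (potMat W h).PosDef) {η : ι → ℝ} (hη : ∀ i, 0 ≤ η i) (i : ι) :
    0 ≤ ((potMat W h)⁻¹ *ᵥ η) i := by
  set H := potMat W h with hH
  set u := H⁻¹ *ᵥ η with hu
  have hHu : H *ᵥ u = η := by
    rw [hu, mulVec_mulVec, mul_nonsing_inv _ ((isUnit_iff_isUnit_det _).1 hP.isUnit), one_mulVec]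
  set m : ι → ℝ := fun i => max (-u i) 0 with hm
  set p : ι → ℝ := fun i => max (u i) 0 with hp
  have hupm : u = p - m := by
    funext j
    simp only [hp, hm, Pi.sub_apply]
    rcases le_total (u j) 0 with h | h
    · rw [max_eq_right h, max_eq_left (by linarith)]; ring
    · rw [max_eq_left h, max_eq_right (by linarith)]; ring
  have hm0 : ∀ j, 0 ≤ m j := fun j => le_max_right _ _
  have hp0 : ∀ j, 0 ≤ p j := fun j => le_max_right _ _
  have hmp : ∀ j, m j * p j = 0 := fun j => by
    simp only [hp, hm]
    rcases le_total (u j) 0 with h | h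
    · rw [max_eq_right h, mul_zero]
    · rw [max_eq_right (by linarith : -u j ≤ 0), zero_mul]
  have h1 : 0 ≤ m ⬝ᵥ (H *ᵥ u) := by
    rw [hHu]
    exact Finset.sum_nonneg fun j _ => mul_nonneg (hm0 j) (hη j)
  have h2 : m ⬝ᵥ (H *ᵥ p) ≤ 0 := by
    simp only [dotProduct, mulVec, Finset.mul_sum]
    refine Finset.sum_nonpos fun j _ => Finset.sum_nonpos fun k _ => ?_
    by_cases hjk : j = k
    · subst hjk
      have : m j * (H j j * p j) = H j j * (m j * p j) := by ring
      rw [this, hmp, mul_zero]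
    · have : H j k = - W j k := by simp [hH, potMat, hjk]
      rw [this]
      nlinarith [mul_nonneg (mul_nonneg (hm0 j) (hW0 j k)) (hp0 k)]
  have h3 : m ⬝ᵥ (H *ᵥ m) ≤ 0 := by
    rw [hupm, mulVec_sub, dotProduct_sub] at h1
    linarith
  have h4 : m = 0 := by
    by_contra hne
    have := hP.dotProduct_mulVec_pos hne
    simp only [star_trivial] at this
    linarith
  have h5 := congrFun hupm i
  rw [h4] at h5
  simp only [sub_zero] at h5
  rw [h5]
  exact hp0 i

end MMatrix

end H22

/-! ### Integration over the potential -/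

namespace H22

section PotentialIntegral

open Matrix

variable {ι : Type*} [Fintype ι] [DecidableEq ι]

omit [Fintype ι] in
lemma continuous_potMat (W : ι → ι → ℝ) : Continuous (potMat W) := by
  refine continuous_matrix fun i j => ?_
  by_cases hij : i = j
  · simp only [potMat, of_apply, hij, if_true]
    fun_prop
  · simp only [potMat, of_apply, hij, if_false]
    fun_prop

/-- Positive definiteness is a closed condition (positive semidefiniteness) together with an open
one (`det ≠ 0`). -/
lemma measurableSet_posDef {W : ι → ι → ℝ} (hW : ∀ i j, W i j = W j i) :
    MeasurableSet {h : ι → ℝ | (potMat W h).PosDef} := by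
  have h1 : {h : ι → ℝ | (potMat W h).PosDef} =
      {h | ∀ v : ι → ℝ, 0 ≤ v ⬝ᵥ (potMat W h *ᵥ v)} ∩ {h | (potMat W h).det ≠ 0} := by
    ext h
    constructor
    · intro hP
      refine ⟨fun v => ?_, hP.det_pos.ne'⟩
      simpa using hP.posSemidef.dotProduct_mulVec_nonneg v
    · rintro ⟨h1, h2⟩
      have : (potMat W h).PosSemidef := by
        refine PosSemidef.of_dotProduct_mulVec_nonneg ?_ fun v => by simpa using h1 v
        rw [IsHermitian, conjTranspose_eq_transpose_of_trivial]
        exact potMat_isSymm hW h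
      exact this.posDef_iff_det_ne_zero.2 h2
  have hc := continuous_potMat W
  rw [h1]
  refine MeasurableSet.inter (IsClosed.measurableSet ?_) (IsOpen.measurableSet ?_)
  · simp only [Set.ofPred_forall]
    refine isClosed_iInter fun v => isClosed_le continuous_const ?_
    exact continuous_const.dotProduct (hc.matrix_mulVec continuous_const)
  · exact isOpen_ne_fun hc.matrix_det continuous_const

lemma measurable_inv_mulVec (W : ι → ι → ℝ) (η : ι → ℝ) (i : ι) :
    Measurable fun h => ((potMat W h)⁻¹ *ᵥ η) i := by
  have hc := continuous_potMat W
  have h1 : (fun h => ((potMat W h)⁻¹ *ᵥ η) i) =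
      fun h => ((potMat W h).det)⁻¹ * ((potMat W h).adjugate *ᵥ η) i := by
    funext h
    rw [inv_def, Ring.inverse_eq_inv', smul_mulVec, Pi.smul_apply, smul_eq_mul]
  rw [h1]
  refine hc.matrix_det.measurable.inv.mul (Continuous.measurable ?_)
  exact (continuous_apply i).comp (hc.matrix_adjugate.matrix_mulVec continuous_const)

/-- The density in the potential `h`:
`exp (-½ ⟨1, H_h 1⟩ - ½ ⟨η, H_h⁻¹ η⟩ + ⟨η, 1⟩) / √det H_h`. -/
noncomputable def stz (W : ι → ι → ℝ) (η h : ι → ℝ) : ℝ :=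
  Real.exp (-(∑ i, h i - ∑ i, ∑ j, W i j) / 2 - (η ⬝ᵥ ((potMat W h)⁻¹ *ᵥ η)) / 2 + ∑ i, η i) /
    √(potMat W h).det

lemma stz_nonneg (W : ι → ι → ℝ) (η h : ι → ℝ) : 0 ≤ stz W η h := by
  unfold stz
  positivity

lemma measurable_stz (W : ι → ι → ℝ) (η : ι → ℝ) : Measurable (stz W η) := by
  unfold stz
  have h1 := measurable_inv_mulVec W η
  have h2 : Measurable fun h => (potMat W h).det := (continuous_potMat W).matrix_det.measurable
  have h3 : Measurable fun h => η ⬝ᵥ ((potMat W h)⁻¹ *ᵥ η) := by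
    simp only [dotProduct]
    exact Finset.measurable_sum _ fun i _ => (h1 i).const_mul _
  fun_prop

lemma lintegral_comp_equiv {α β : Type*} [Fintype α] [Fintype β] (e : α ≃ β)
    (F : (β → ℝ) → ENNReal) : ∫⁻ h, F h = ∫⁻ h : α → ℝ, F (h ∘ e.symm) := by
  have h1 := volume_measurePreserving_piCongrLeft (fun _ : β => ℝ) e
  rw [← h1.lintegral_comp_emb (MeasurableEquiv.measurableEmbedding _)]
  refine lintegral_congr fun h => ?_
  congr 1
  funext b
  obtain ⟨a, rfl⟩ := e.surjective b
  rw [MeasurableEquiv.coe_piCongrLeft, Equiv.piCongrLeft_apply_apply]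
  simp

lemma lintegral_option {κ : Type*} [Fintype κ] (F : (Option κ → ℝ) → ENNReal)
    (hF : Measurable F) :
    ∫⁻ h, F h = ∫⁻ h₁ : κ → ℝ, ∫⁻ a : ℝ, F (fun o => o.elim a h₁) := by
  have h1 := Measure.pi_map_piOptionEquivProd (fun _ : Option κ => (volume : Measure ℝ))
  have h2 : (volume : Measure (Option κ → ℝ)) = Measure.pi fun _ => volume := rfl
  rw [h2, ← h1, lintegral_map_equiv, lintegral_prod]
  · refine lintegral_congr fun h₁ => lintegral_congr fun a => ?_
    congr 1
    funext o
    cases o <;> rfl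
  · exact (hF.comp (MeasurableEquiv.measurable _)).aemeasurable

lemma potMat_comp {α β : Type*} [DecidableEq α] [DecidableEq β] (e : α ≃ β)
    (W : β → β → ℝ) (h : α → ℝ) :
    potMat W (h ∘ e.symm) = (potMat (fun i j => W (e i) (e j)) h).submatrix e.symm e.symm := by
  ext i j
  simp [potMat]

lemma posDef_potMat_comp {α β : Type*} [Fintype α] [Fintype β] [DecidableEq α] [DecidableEq β]
    (e : α ≃ β) (W : β → β → ℝ) (h : α → ℝ) :
    (potMat W (h ∘ e.symm)).PosDef ↔ (potMat (fun i j => W (e i) (e j)) h).PosDef := by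
  rw [potMat_comp]
  refine ⟨fun hP => ?_, fun hP => hP.submatrix e.symm.injective⟩
  have := hP.submatrix e.injective
  simpa using this

lemma inv_mulVec_potMat_comp {α β : Type*} [Fintype α] [Fintype β] [DecidableEq α]
    [DecidableEq β] (e : α ≃ β) (W : β → β → ℝ) (η : β → ℝ) (h : α → ℝ) :
    (potMat W (h ∘ e.symm))⁻¹ *ᵥ η =
      ((potMat (fun i j => W (e i) (e j)) h)⁻¹ *ᵥ (η ∘ e)) ∘ e.symm := by
  rw [potMat_comp, inv_submatrix_equiv, submatrix_mulVec_equiv]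
  rfl

lemma stz_comp {α β : Type*} [Fintype α] [Fintype β] [DecidableEq α] [DecidableEq β]
    (e : α ≃ β) (W : β → β → ℝ) (η : β → ℝ) (h : α → ℝ) :
    stz W η (h ∘ e.symm) = stz (fun i j => W (e i) (e j)) (η ∘ e) h := by
  unfold stz
  rw [inv_mulVec_potMat_comp, potMat_comp, det_submatrix_equiv_self]
  have e1 : ∀ f : β → ℝ, ∑ i, f i = ∑ i, f (e i) := fun f => (e.sum_comp f).symm
  rw [e1 (fun i => (h ∘ e.symm) i), e1 (fun i => ∑ j, W i j), e1 η]
  simp_rw [e1 (fun j => W (e _) j)]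
  simp only [dotProduct]
  rw [e1]
  simp

lemma stz_option {κ : Type*} [Fintype κ] [DecidableEq κ] {W : Option κ → Option κ → ℝ}
    (hW : ∀ i j, W i j = W j i) (η : Option κ → ℝ) (h₁ : κ → ℝ) (a s c : ℝ)
    (hP : (potMat W (fun o => o.elim a h₁)).PosDef)
    (hs : s = schur (potMat W (fun o => o.elim a h₁)))
    (hc : c = η none + (fun i => W none (some i)) ⬝ᵥ
      ((potMat (fun i j => W (some i) (some j)) h₁)⁻¹ *ᵥ fun i => η (some i))) :
    stz W η (fun o => o.elim a h₁) =
      stz (fun i j => W (some i) (some j)) (fun i => η (some i) + W none (some i)) h₁ *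
        (Real.exp (-s / 2 - c ^ 2 / (2 * s) + c) / √s) := by
  have hS := potMat_isSymm hW (fun o => o.elim a h₁)
  obtain ⟨h1, h2⟩ := (posDef_option hS).1 hP
  have hsub : (potMat W (fun o => o.elim a h₁)).submatrix some some =
      potMat (fun i j => W (some i) (some j)) h₁ := by
    ext i j
    simp [potMat]
  have hrow : (fun i => potMat W (fun o => o.elim a h₁) none (some i)) =
      -(fun i => W none (some i)) := by
    funext i
    simp [potMat]
  have h00 : potMat W (fun o => o.elim a h₁) none none = a - W none none := by simp [potMat]
  set G := (potMat (fun i j => W (some i) (some j)) h₁)⁻¹ with hG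
  set w : κ → ℝ := fun i => W none (some i) with hw
  set η₁ : κ → ℝ := fun i => η (some i) with hη₁
  have hs' : s = a - W none none - w ⬝ᵥ (G *ᵥ w) := by
    rw [hs, schur, hsub, hrow, h00, mulVec_neg, neg_dotProduct_neg]
  have hGs : G.IsSymm := by
    rw [hG]
    exact (potMat_isSymm (fun i j => hW _ _) h₁).inv
  have hcross : η₁ ⬝ᵥ (G *ᵥ w) = w ⬝ᵥ (G *ᵥ η₁) := by
    rw [dotProduct_mulVec, ← mulVec_transpose, hGs.eq, dotProduct_comm]
  have hsum : (fun i => η (some i) + W none (some i)) = η₁ + w := rfl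
  unfold stz
  rw [dotProduct_inv_option hS hP η c (by rw [hsub, hrow, neg_dotProduct, sub_neg_eq_add, hc]),
    det_option hS h1, ← hs, hsub, Real.sqrt_mul (hsub ▸ h1).det_pos.le, div_mul_div_comm,
    ← Real.exp_add, hsum, ← hG]
  congr 2
  rw [mulVec_add, add_dotProduct, dotProduct_add, dotProduct_add, hcross]
  simp only [Fintype.sum_option, Finset.sum_add_distrib, Pi.add_apply, Option.elim]
  have e1 : ∑ i, W (some i) none = ∑ i, w i := Finset.sum_congr rfl fun i _ => hW _ _
  have e2 : ∑ i, W none (some i) = ∑ i, w i := rfl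
  have e3 : ∑ i, η (some i) = ∑ i, η₁ i := rfl
  have e4 : c ^ 2 / (2 * s) = c ^ 2 / s / 2 := by rw [div_div, mul_comm]
  rw [e1, e2, e3, e4]
  linear_combination hs' / 2 - hc

/-- Integrating out the potential at one vertex: after the translation to the Schur complement `s`,
the integrand factorizes and the pinning `η` on the other vertices is increased by `W none ·`.
The test function `φ` is evaluated at `(H_h⁻¹ η)_none = c / s`. -/
lemma lintegral_stz_option {κ : Type*} [Fintype κ] [DecidableEq κ]
    {W : Option κ → Option κ → ℝ} (hW : ∀ i j, W i j = W j i) (η : Option κ → ℝ)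
    (φ : ℝ → ℝ) (hφ : Measurable φ) (C : ENNReal)
    (hC : ∀ h₁ : κ → ℝ, (potMat (fun i j => W (some i) (some j)) h₁).PosDef → ∀ c,
      c = η none + (fun i => W none (some i)) ⬝ᵥ
      ((potMat (fun i j => W (some i) (some j)) h₁)⁻¹ *ᵥ fun i => η (some i)) →
      ∫⁻ s in Set.Ioi 0, ENNReal.ofReal
        (Real.exp (-s / 2 - c ^ 2 / (2 * s) + c) / √s * φ (c / s)) = C) :
    ∫⁻ h in {h | (potMat W h).PosDef},
        ENNReal.ofReal (stz W η h * φ (((potMat W h)⁻¹ *ᵥ η) none)) =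
      (∫⁻ h₁ in {h₁ | (potMat (fun i j => W (some i) (some j)) h₁).PosDef}, ENNReal.ofReal
        (stz (fun i j => W (some i) (some j)) (fun i => η (some i) + W none (some i)) h₁)) * C := by
  have hm := measurableSet_posDef hW
  have hm₁ : MeasurableSet {h₁ | (potMat (fun i j => W (some i) (some j)) h₁).PosDef} :=
    measurableSet_posDef fun i j => hW _ _
  rw [← lintegral_indicator hm, lintegral_option, ← lintegral_mul_const'',
    ← lintegral_indicator hm₁]
  · refine lintegral_congr fun h₁ => ?_
    by_cases h1 : (potMat (fun i j => W (some i) (some j)) h₁).PosDef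
    · rw [Set.indicator_of_mem (by exact h1), ← hC h₁ h1 _ rfl,
        ← lintegral_const_mul' _ _ ENNReal.ofReal_ne_top]
      set c := η none + (fun i => W none (some i)) ⬝ᵥ
        ((potMat (fun i j => W (some i) (some j)) h₁)⁻¹ *ᵥ fun i => η (some i)) with hc
      -- `σ` is the shift between the potential `a` at `none` and the Schur complement.
      set σ : ℝ := W none none + (fun i => W none (some i)) ⬝ᵥ
        ((potMat (fun i j => W (some i) (some j)) h₁)⁻¹ *ᵥ fun i => W none (some i)) with hσ
      rw [← lintegral_indicator measurableSet_Ioi]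
      refine (lintegral_congr fun a => ?_).trans (lintegral_sub_right_eq_self _ σ)
      have hsub : (potMat W (fun o => o.elim a h₁)).submatrix some some =
          potMat (fun i j => W (some i) (some j)) h₁ := by
        ext i j
        simp [potMat]
      have hrow : (fun i => potMat W (fun o => o.elim a h₁) none (some i)) =
          -(fun i => W none (some i)) := by
        funext i
        simp [potMat]
      have hsch : a - σ = schur (potMat W (fun o => o.elim a h₁)) := by
        rw [schur, hsub, hrow, mulVec_neg, neg_dotProduct_neg, hσ]
        simp [potMat]
        ring
      have hS := potMat_isSymm hW (fun o => o.elim a h₁)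
      by_cases ha : 0 < a - σ
      · have hP : (potMat W (fun o => o.elim a h₁)).PosDef := by
          rw [posDef_option hS, hsub, ← hsch]
          exact ⟨h1, ha⟩
        rw [Set.indicator_of_mem (by exact hP), Set.indicator_of_mem (by exact ha),
          ← ENNReal.ofReal_mul (stz_nonneg _ _ _), ← mul_assoc,
          ← stz_option hW η h₁ a (a - σ) c hP hsch hc,
          inv_mulVec_option hS hP η c
            (by rw [hsub, hrow, neg_dotProduct, sub_neg_eq_add, hc]), ← hsch]
        rfl
      · rw [Set.indicator_of_notMem, Set.indicator_of_notMem (by exact ha)]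
        intro hP
        exact ha (hsch ▸ ((posDef_option hS).1 hP).2)
    · rw [Set.indicator_of_notMem (by exact h1)]
      refine (lintegral_congr fun a => ?_).trans lintegral_zero
      refine Set.indicator_of_notMem (fun hP => h1 ?_) _
      have := ((posDef_option (potMat_isSymm hW (fun o => o.elim a h₁))).1 hP).1
      convert this using 1
      ext i j
      simp [potMat]
  · exact (measurable_stz _ _).ennreal_ofReal.aemeasurable
  · refine Measurable.indicator ?_ hm
    exact ((measurable_stz _ _).mul (hφ.comp (measurable_inv_mulVec _ _ _))).ennreal_ofReal

/-- The density `stz` on the cone of positive definite `H_h` has total mass `√(2π) ^ |ι|`,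
whatever the nonnegative weights and pinning. -/
theorem lintegral_stz (ι : Type*) [Fintype ι] : ∀ [DecidableEq ι] (W : ι → ι → ℝ) (η : ι → ℝ),
    (∀ i j, W i j = W j i) → (∀ i j, 0 ≤ W i j) → (∀ i, 0 ≤ η i) →
    ∫⁻ h in {h | (potMat W h).PosDef}, ENNReal.ofReal (stz W η h) =
      ENNReal.ofReal √(2 * π) ^ Fintype.card ι := by
  refine Fintype.induction_empty_option (P := fun ι [Fintype ι] =>
    ∀ [DecidableEq ι] (W : ι → ι → ℝ) (η : ι → ℝ),
    (∀ i j, W i j = W j i) → (∀ i j, 0 ≤ W i j) → (∀ i, 0 ≤ η i) →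
    ∫⁻ h in {h | (potMat W h).PosDef}, ENNReal.ofReal (stz W η h) =
      ENNReal.ofReal √(2 * π) ^ Fintype.card ι) ?_ ?_ ?_ ι
  · intro α β _ e ih _ W η hW hW0 hη
    let _ : Fintype α := Fintype.ofEquiv β e.symm
    have _ : DecidableEq α := e.decidableEq
    have hm := measurableSet_posDef hW
    have hm' : MeasurableSet {h : α → ℝ | (potMat (fun i j => W (e i) (e j)) h).PosDef} :=
      measurableSet_posDef fun i j => hW _ _
    rw [← Fintype.card_congr e, ← ih (fun i j => W (e i) (e j)) (η ∘ e) (fun i j => hW _ _)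
      (fun i j => hW0 _ _) (fun i => hη _), ← lintegral_indicator hm, ← lintegral_indicator hm',
      lintegral_comp_equiv e]
    refine lintegral_congr fun h => ?_
    by_cases hP : (potMat (fun i j => W (e i) (e j)) h).PosDef
    · rw [Set.indicator_of_mem (by exact (posDef_potMat_comp e W h).2 hP),
        Set.indicator_of_mem (by exact hP), stz_comp]
    · rw [Set.indicator_of_notMem (by exact fun h' => hP ((posDef_potMat_comp e W h).1 h')),
        Set.indicator_of_notMem (by exact hP)]
  · intro _ W η _ _ _
    have h1 : {h : PEmpty → ℝ | (potMat W h).PosDef} = Set.univ := by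
      ext h
      simp only [Set.mem_ofPred_eq, Set.mem_univ, iff_true]
      exact PosDef.of_dotProduct_mulVec_pos (by ext i; exact i.elim)
        (fun {v} hv => absurd (Subsingleton.elim v 0) hv)
    have h2 : ∀ h, stz W η h = 1 := fun h => by simp [stz]
    rw [h1, Measure.restrict_univ]
    simp only [h2]
    rw [lintegral_const, volume_pi, Measure.pi_univ]
    simp
  · intro κ _ ih _ W η hW hW0 hη
    have _ : DecidableEq κ := fun a b => decidable_of_iff (some a = some b) (by simp)
    have h1 := lintegral_stz_option hW η (fun _ => 1) measurable_const
      (ENNReal.ofReal √(2 * π)) (by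
        intro h₁ hP c hc
        simp only [mul_one]
        refine invGauss_fst ?_
        rw [hc]
        refine add_nonneg (hη _) (Finset.sum_nonneg fun i _ => mul_nonneg (hW0 _ _) ?_)
        exact inv_mulVec_nonneg (fun i j => hW0 _ _) hP (fun i => hη _) i)
    simp only [mul_one] at h1
    rw [Fintype.card_option, pow_succ, ← ih _ (fun i => η (some i) + W none (some i))
      (fun i j => hW (some i) (some j)) (fun i j => hW0 _ _)
      (fun i => add_nonneg (hη _) (hW0 _ _)), ← h1]
    congr!

/-- For a pinning `η = ε δ_x`, the mean of `(H_h⁻¹ η)_x` under the normalized density `stz` is one: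
the vertex `x` is split off, and `c = ε` since `η` vanishes at the other vertices. -/
theorem lintegral_stz_single {V : Type*} [Fintype V] [DecidableEq V] (W : V → V → ℝ)
    (hW : ∀ i j, W i j = W j i) (hW0 : ∀ i j, 0 ≤ W i j) (x : V) {ε : ℝ} (hε : 0 < ε) :
    ∫⁻ h in {h | (potMat W h).PosDef}, ENNReal.ofReal (stz W (singlePin x ε) h *
        ((potMat W h)⁻¹ *ᵥ singlePin x ε) x) =
      ENNReal.ofReal √(2 * π) ^ Fintype.card V := by
  set e := Equiv.optionSubtypeNe x with he
  have hex : e none = x := by simp [he]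
  have hesome : ∀ i, e (some i) ≠ x := fun i => by simpa [he] using i.2
  have hm := measurableSet_posDef hW
  have hm' : MeasurableSet {h : Option {b // b ≠ x} → ℝ |
      (potMat (fun i j => W (e i) (e j)) h).PosDef} :=
    measurableSet_posDef fun i j => hW _ _
  have h1 := lintegral_stz_option (W := fun i j => W (e i) (e j)) (fun i j => hW _ _)
    (singlePin x ε ∘ e) (fun a => a) measurable_id (ENNReal.ofReal √(2 * π)) (by
      intro h₁ hP c hc
      have h0 : (fun i => (singlePin x ε ∘ e) (some i)) = 0 := by
        funext i
        simp [singlePin, hesome i]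
      rw [h0, mulVec_zero, dotProduct_zero, add_zero] at hc
      have : c = ε := by simp [hc, singlePin, hex]
      rw [this]
      exact invGauss_snd hε)
  have hcard : Fintype.card V = Fintype.card {b // b ≠ x} + 1 := by
    rw [← Fintype.card_option]
    exact Fintype.card_congr e.symm
  rw [hcard, pow_succ, ← lintegral_stz {b // b ≠ x} (fun i j => W (e (some i)) (e (some j)))
    (fun i => (singlePin x ε ∘ e) (some i) + W (e none) (e (some i))) (fun i j => hW _ _)
    (fun i j => hW0 _ _), ← h1, ← lintegral_indicator hm, ← lintegral_indicator hm',
    lintegral_comp_equiv e]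
  · refine lintegral_congr fun h => ?_
    by_cases hP : (potMat (fun i j => W (e i) (e j)) h).PosDef
    · rw [Set.indicator_of_mem (by exact (posDef_potMat_comp e W h).2 hP),
        Set.indicator_of_mem (by exact hP), stz_comp,
        inv_mulVec_potMat_comp]
      have : e.symm x = none := (Equiv.symm_apply_eq e).2 hex.symm
      simp [this]
    · rw [Set.indicator_of_notMem (by exact fun h' => hP ((posDef_potMat_comp e W h).1 h')),
        Set.indicator_of_notMem (by exact hP)]
  · intro i
    refine add_nonneg ?_ (hW0 _ _)
    simp [singlePin, hesome i]

end PotentialIntegral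

end H22

/-! ### Gaussian integrals with a positive definite matrix -/

namespace H22

section GaussianIntegral

open Matrix

variable {ι : Type*} [Fintype ι] [DecidableEq ι]

omit [DecidableEq ι] in
lemma lintegral_gauss_pi :
    ∫⁻ y : ι → ℝ, ENNReal.ofReal (Real.exp (-(y ⬝ᵥ y) / 2)) =
      ENNReal.ofReal (√(2 * π) ^ Fintype.card ι) := by
  have h1 : ∀ y : ι → ℝ, Real.exp (-(y ⬝ᵥ y) / 2) = ∏ i, Real.exp (-(1 / 2) * y i ^ 2) := by
    intro y
    rw [← Real.exp_sum, ← Finset.mul_sum]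
    congr 1
    simp only [dotProduct, pow_two]
    ring
  have hi : Integrable fun y : ι → ℝ => ∏ i, Real.exp (-(1 / 2) * y i ^ 2) :=
    Integrable.fintype_prod fun _ => integrable_exp_neg_mul_sq (by norm_num)
  have : π / (1 / 2) = 2 * π := by ring
  simp_rw [h1]
  rw [← ofReal_integral_eq_lintegral_ofReal hi
    (Filter.Eventually.of_forall fun y => Finset.prod_nonneg fun i _ => (Real.exp_pos _).le),
    integral_fintype_prod_volume_eq_prod (fun _ (y : ℝ) => Real.exp (-(1 / 2) * y ^ 2)),
    integral_gaussian, this, Finset.prod_const, Finset.card_univ]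

open scoped MatrixOrder in
/-- Factor `L = Bᵀ B` and substitute `y = B s`. -/
lemma lintegral_gauss_matrix {L : Matrix ι ι ℝ} (hL : L.PosDef) :
    ∫⁻ s : ι → ℝ, ENNReal.ofReal (Real.exp (-(s ⬝ᵥ (L *ᵥ s)) / 2)) =
      ENNReal.ofReal (√(2 * π) ^ Fintype.card ι / √L.det) := by
  obtain ⟨B, hB⟩ : ∃ B : Matrix ι ι ℝ, L = Bᵀ * B := by
    obtain ⟨B, hB⟩ := CStarAlgebra.nonneg_iff_eq_star_mul_self.mp hL.posSemidef.nonneg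
    exact ⟨B, by rw [hB, star_eq_conjTranspose, conjTranspose_eq_transpose_of_trivial]⟩
  have hdet : L.det = B.det ^ 2 := by rw [hB, det_mul, det_transpose, pow_two]
  have hB0 : B.det ≠ 0 := fun h => hL.det_pos.ne' (by rw [hdet, h]; simp)
  have hq : ∀ s, s ⬝ᵥ (L *ᵥ s) = (B *ᵥ s) ⬝ᵥ (B *ᵥ s) := by
    intro s
    rw [hB, ← mulVec_mulVec, dotProduct_mulVec s, vecMul_transpose]
  have hmeas : Measurable (Matrix.toLin' B) :=
    (LinearMap.continuous_of_finiteDimensional _).measurable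
  have h1 := lintegral_map (μ := (volume : Measure (ι → ℝ))) (g := Matrix.toLin' B)
    (f := fun y => ENNReal.ofReal (Real.exp (-(y ⬝ᵥ y) / 2)))
    (by
      refine Measurable.ennreal_ofReal (Continuous.measurable ?_)
      simp only [dotProduct]
      fun_prop) hmeas
  rw [Real.map_matrix_volume_pi_eq_smul_volume_pi hB0, lintegral_smul_measure,
    lintegral_gauss_pi] at h1
  simp only [toLin'_apply] at h1
  simp_rw [hq, ← h1]
  rw [hdet, Real.sqrt_sq_eq_abs, smul_eq_mul, ← ENNReal.ofReal_mul (abs_nonneg _), abs_inv,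
    div_eq_inv_mul]

end GaussianIntegral

section EdgeSum

/-- Every edge is counted once for each of its two orientations. -/
lemma sum_edgeSet {α : Type*} [Fintype α] [DecidableEq α] (G : SimpleGraph α)
    (F : Sym2 α → ℝ) :
    ∑ a, ∑ b, (if G.Adj a b then F s(a, b) else 0) =
      2 * ∑ e ∈ Finset.univ.filter (fun e => e ∈ G.edgeSet), F e := by
  rw [← Fintype.sum_prod_type' (f := fun a b => if G.Adj a b then F s(a, b) else 0),
    ← Finset.sum_filter (fun p : α × α => G.Adj p.1 p.2),
    ← Finset.sum_fiberwise_of_maps_to (g := fun p : α × α => s(p.1, p.2))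
      (t := Finset.univ.filter (fun e => e ∈ G.edgeSet)), Finset.mul_sum]
  · refine Finset.sum_congr rfl fun e he => ?_
    induction e using Sym2.ind with
    | _ u v =>
    have huv : G.Adj u v := by simpa using he
    have hf : ((Finset.univ.filter fun p : α × α => G.Adj p.1 p.2).filter
        fun p => s(p.1, p.2) = s(u, v)) = {(u, v), (v, u)} := by
      ext ⟨a, b⟩
      simp only [Finset.mem_filter, Finset.mem_univ, true_and, Sym2.eq_iff, Finset.mem_insert,
        Finset.mem_singleton, Prod.mk.injEq]
      constructor
      · exact fun h => h.2
      · rintro (⟨rfl, rfl⟩ | ⟨rfl, rfl⟩)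
        · exact ⟨huv, .inl ⟨rfl, rfl⟩⟩
        · exact ⟨huv.symm, .inr ⟨rfl, rfl⟩⟩
    rw [hf, Finset.sum_pair (by simpa using fun h => absurd h huv.ne), Sym2.eq_swap (a := v)]
    ring
  · intro p hp
    simpa using hp

end EdgeSum

end H22

/-! ### The change of variables from `t` to the potential -/

namespace H22

section ChangeOfVariables

open Matrix

variable {ι : Type*} [Fintype ι]

/-- The potential `h_i = ∑_j W_ij e^{t_j - t_i} + η_i e^{-t_i}`, i.e. the one for which `e^t` solves
`H_h u = η`. -/
noncomputable def potOf (W : ι → ι → ℝ) (η t : ι → ℝ) : ι → ℝ := fun i =>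
  ∑ j, W i j * Real.exp (t j - t i) + η i * Real.exp (-t i)

variable [DecidableEq ι]

/-- The matrix `D H_h D` with `D = diag (e^t)` and `h = potOf W η t`: the Laplacian with
conductances `W_ij e^{t_i + t_j}` and killing rates `η_i e^{t_i}`. -/
noncomputable def lapOf (W : ι → ι → ℝ) (η t : ι → ℝ) : Matrix ι ι ℝ :=
  Matrix.of fun i j => Real.exp (t i) * potMat W (potOf W η t) i j * Real.exp (t j)

lemma lapOf_eq (W : ι → ι → ℝ) (η t : ι → ℝ) :
    lapOf W η t = diagonal (fun i => Real.exp (t i)) * potMat W (potOf W η t) *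
      diagonal (fun i => Real.exp (t i)) := by
  ext i j
  rw [mul_diagonal, diagonal_mul, lapOf, of_apply]

lemma det_lapOf (W : ι → ι → ℝ) (η t : ι → ℝ) :
    (lapOf W η t).det = Real.exp (∑ i, t i) ^ 2 * (potMat W (potOf W η t)).det := by
  rw [lapOf_eq, det_mul, det_mul, det_diagonal, Real.exp_sum]
  ring

omit [DecidableEq ι] in
lemma exp_mul_potOf (W : ι → ι → ℝ) (η t : ι → ℝ) (i : ι) :
    potOf W η t i * Real.exp (t i) = ∑ j, W i j * Real.exp (t j) + η i := by
  rw [potOf, add_mul, Finset.sum_mul, mul_assoc, ← Real.exp_add, neg_add_cancel, Real.exp_zero,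
    mul_one]
  congr 1
  refine Finset.sum_congr rfl fun j _ => ?_
  rw [mul_assoc, ← Real.exp_add, sub_add_cancel]

lemma potMat_mulVec (W : ι → ι → ℝ) (h u : ι → ℝ) (i : ι) :
    (potMat W h *ᵥ u) i = h i * u i - ∑ j, W i j * u j := by
  simp [potMat, mulVec, dotProduct, sub_mul, Finset.sum_sub_distrib]

lemma potMat_potOf_mulVec (W : ι → ι → ℝ) (η t : ι → ℝ) :
    potMat W (potOf W η t) *ᵥ (fun i => Real.exp (t i)) = η := by
  funext i
  rw [potMat_mulVec, exp_mul_potOf]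
  ring

lemma potOf_eq_of_mulVec {W : ι → ι → ℝ} {η h t : ι → ℝ}
    (H : potMat W h *ᵥ (fun i => Real.exp (t i)) = η) : potOf W η t = h := by
  funext i
  have h1 := exp_mul_potOf W η t i
  have h2 := congrFun H i
  rw [potMat_mulVec] at h2
  exact mul_right_cancel₀ (Real.exp_pos (t i)).ne' (by linarith)

omit [DecidableEq ι] in
lemma sum_sum_symm {W : ι → ι → ℝ} (hW : ∀ i j, W i j = W j i) (g : ι → ι → ℝ) :
    ∑ i, ∑ j, W i j * g i j = ∑ i, ∑ j, W i j * g j i := by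
  rw [Finset.sum_comm]
  exact Finset.sum_congr rfl fun i _ => Finset.sum_congr rfl fun j _ => by rw [hW]

/-- The quadratic form of the Laplacian as a Dirichlet energy. -/
lemma lapOf_quadratic {W : ι → ι → ℝ} (hW : ∀ i j, W i j = W j i) (η t s : ι → ℝ) :
    s ⬝ᵥ (lapOf W η t *ᵥ s) =
      1 / 2 * ∑ i, ∑ j, W i j * ((s i - s j) ^ 2 * Real.exp (t i + t j)) +
        ∑ i, η i * (s i ^ 2 * Real.exp (t i)) := by
  have h1 : ∀ i, s i * (lapOf W η t *ᵥ s) i =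
      ∑ j, W i j * ((s i ^ 2 - s i * s j) * Real.exp (t i + t j)) +
        η i * (s i ^ 2 * Real.exp (t i)) := by
    intro i
    have e1 : (lapOf W η t *ᵥ s) i =
        Real.exp (t i) * (potMat W (potOf W η t) *ᵥ fun j => Real.exp (t j) * s j) i := by
      simp only [lapOf, mulVec, dotProduct, of_apply, Finset.mul_sum]
      exact Finset.sum_congr rfl fun j _ => by ring
    rw [e1, potMat_mulVec, ← mul_assoc (potOf W η t i), exp_mul_potOf]
    have e2 : ∑ j, W i j * ((s i ^ 2 - s i * s j) * Real.exp (t i + t j)) =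
        s i ^ 2 * Real.exp (t i) * ∑ j, W i j * Real.exp (t j) -
          s i * Real.exp (t i) * ∑ j, W i j * (Real.exp (t j) * s j) := by
      rw [Finset.mul_sum, Finset.mul_sum, ← Finset.sum_sub_distrib]
      exact Finset.sum_congr rfl fun j _ => by rw [Real.exp_add]; ring
    rw [e2]
    ring
  have h2 := sum_sum_symm hW fun i j => (s i ^ 2 - s i * s j) * Real.exp (t i + t j)
  have h3 : ∑ i, ∑ j, W i j * ((s i - s j) ^ 2 * Real.exp (t i + t j)) =
      ∑ i, ∑ j, W i j * ((s i ^ 2 - s i * s j) * Real.exp (t i + t j)) +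
      ∑ i, ∑ j, W i j * ((s j ^ 2 - s j * s i) * Real.exp (t j + t i)) := by
    simp_rw [← Finset.sum_add_distrib]
    refine Finset.sum_congr rfl fun i _ => Finset.sum_congr rfl fun j _ => ?_
    rw [add_comm (t j)]
    ring
  rw [dotProduct, Finset.sum_congr rfl fun i _ => h1 i, Finset.sum_add_distrib, h3, ← h2]
  ring

lemma lapOf_isSymm {W : ι → ι → ℝ} (hW : ∀ i j, W i j = W j i) (η t : ι → ℝ) :
    (lapOf W η t).IsSymm := by
  ext i j
  simp only [transpose_apply, lapOf, of_apply, (potMat_isSymm hW (potOf W η t)).apply i j]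
  ring

variable {W : ι → ι → ℝ} {G : SimpleGraph ι} {x : ι} {ε : ℝ}

/-- A vector of zero energy is constant along edges and vanishes at the pinned vertex. -/
lemma lapOf_posDef (hW : ∀ i j, W i j = W j i) (hW0 : ∀ i j, 0 ≤ W i j) (hG : G.Connected)
    (hWG : ∀ i j, G.Adj i j → 0 < W i j) (hε : 0 < ε) (t : ι → ℝ) :
    (lapOf W (singlePin x ε) t).PosDef := by
  refine PosDef.of_dotProduct_mulVec_pos ?_ fun {s} hs => ?_
  · rw [IsHermitian, conjTranspose_eq_transpose_of_trivial]
    exact lapOf_isSymm hW _ _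
  simp only [star_trivial]
  rw [lapOf_quadratic hW]
  have n1 : ∀ i j, 0 ≤ W i j * ((s i - s j) ^ 2 * Real.exp (t i + t j)) := fun i j =>
    mul_nonneg (hW0 i j) (by positivity)
  have n2 : ∀ i, 0 ≤ singlePin x ε i * (s i ^ 2 * Real.exp (t i)) := fun i =>
    mul_nonneg (by unfold singlePin; split_ifs <;> linarith) (by positivity)
  have n3 : 0 ≤ ∑ i, ∑ j, W i j * ((s i - s j) ^ 2 * Real.exp (t i + t j)) :=
    Finset.sum_nonneg fun i _ => Finset.sum_nonneg fun j _ => n1 i j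
  have n4 : 0 ≤ ∑ i, singlePin x ε i * (s i ^ 2 * Real.exp (t i)) :=
    Finset.sum_nonneg fun i _ => n2 i
  by_contra hcon
  have z1 : ∑ i, ∑ j, W i j * ((s i - s j) ^ 2 * Real.exp (t i + t j)) = 0 := by linarith
  have z2 : ∑ i, singlePin x ε i * (s i ^ 2 * Real.exp (t i)) = 0 := by linarith
  have hx : s x = 0 := by
    have := (Finset.sum_eq_zero_iff_of_nonneg fun i _ => n2 i).1 z2 x (Finset.mem_univ _)
    simpa [singlePin, hε.ne'] using this
  have hadj : ∀ i j, G.Adj i j → s i = s j := by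
    intro i j hij
    have h1 := (Finset.sum_eq_zero_iff_of_nonneg
      fun i _ => Finset.sum_nonneg fun j _ => n1 i j).1 z1 i (Finset.mem_univ _)
    have h2 := (Finset.sum_eq_zero_iff_of_nonneg fun j _ => n1 i j).1 h1 j (Finset.mem_univ _)
    have h3 : (s i - s j) ^ 2 = 0 := by simpa [(hWG i j hij).ne'] using h2
    exact sub_eq_zero.1 (pow_eq_zero_iff two_ne_zero |>.1 h3)
  refine hs (funext fun i => ?_)
  obtain ⟨p⟩ := hG.preconnected i x
  have : ∀ {a b} (_ : G.Walk a b), s a = s b := by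
    intro a b p
    induction p with
    | nil => rfl
    | cons h _ ih => rw [hadj _ _ h, ih]
  rw [this p, hx, Pi.zero_apply]

lemma potMat_potOf_posDef (hW : ∀ i j, W i j = W j i) (hW0 : ∀ i j, 0 ≤ W i j)
    (hG : G.Connected) (hWG : ∀ i j, G.Adj i j → 0 < W i j) (hε : 0 < ε) (t : ι → ℝ) :
    (potMat W (potOf W (singlePin x ε) t)).PosDef := by
  have h1 := lapOf_posDef (x := x) hW hW0 hG hWG hε t
  refine PosDef.of_dotProduct_mulVec_pos ?_ fun {s} hs => ?_
  · rw [IsHermitian, conjTranspose_eq_transpose_of_trivial]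
    exact potMat_isSymm hW _
  have h2 := h1.dotProduct_mulVec_pos (x := fun i => Real.exp (-t i) * s i) (by
    intro h0
    refine hs (funext fun i => ?_)
    simpa [(Real.exp_pos _).ne'] using congrFun h0 i)
  convert h2 using 1
  simp only [star_trivial, dotProduct, mulVec, lapOf, of_apply, Finset.mul_sum]
  refine Finset.sum_congr rfl fun i _ => Finset.sum_congr rfl fun j _ => ?_
  have e : ∀ k, Real.exp (t k) * Real.exp (-t k) = 1 := fun k => by
    rw [← Real.exp_add, add_neg_cancel, Real.exp_zero]
  linear_combination (-(s i * potMat W (potOf W (singlePin x ε) t) i j * s j)) *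
    (e i * (Real.exp (t j) * Real.exp (-t j)) + e j)

lemma inv_mulVec_singlePin (hW : ∀ i j, W i j = W j i) (hW0 : ∀ i j, 0 ≤ W i j)
    (hG : G.Connected) (hWG : ∀ i j, G.Adj i j → 0 < W i j) (hε : 0 < ε) (t : ι → ℝ) :
    (potMat W (potOf W (singlePin x ε) t))⁻¹ *ᵥ singlePin x ε = fun i => Real.exp (t i) := by
  have hP := potMat_potOf_posDef (x := x) hW hW0 hG hWG hε t
  have h := congrArg (fun v => (potMat W (potOf W (singlePin x ε) t))⁻¹ *ᵥ v)
    (potMat_potOf_mulVec W (singlePin x ε) t)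
  simp only [mulVec_mulVec, nonsing_inv_mul _ ((isUnit_iff_isUnit_det _).1 hP.isUnit),
    one_mulVec] at h
  exact h.symm

lemma potOf_injective (hW : ∀ i j, W i j = W j i) (hW0 : ∀ i j, 0 ≤ W i j)
    (hG : G.Connected) (hWG : ∀ i j, G.Adj i j → 0 < W i j) (hε : 0 < ε) :
    Function.Injective (potOf W (singlePin x ε)) := by
  intro t t' h
  have h1 := inv_mulVec_singlePin (x := x) hW hW0 hG hWG hε t
  rw [h, inv_mulVec_singlePin hW hW0 hG hWG hε t'] at h1
  exact funext fun i => (Real.exp_injective (congrFun h1 i)).symm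

/-- Surjectivity onto the positive definite cone: `u = H_h⁻¹ η` is nonnegative, and a zero of `u`
propagates to all neighbours, hence would reach `x`, where `η` is positive. -/
lemma range_potOf (hW : ∀ i j, W i j = W j i) (hW0 : ∀ i j, 0 ≤ W i j)
    (hG : G.Connected) (hWG : ∀ i j, G.Adj i j → 0 < W i j) (hε : 0 < ε) :
    Set.range (potOf W (singlePin x ε)) = {h | (potMat W h).PosDef} := by
  refine Set.Subset.antisymm ?_ ?_
  · rintro _ ⟨t, rfl⟩
    exact potMat_potOf_posDef hW hW0 hG hWG hε t
  intro h (hP : (potMat W h).PosDef)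
  have hη : ∀ i, 0 ≤ singlePin x ε i := fun i => by unfold singlePin; split_ifs <;> linarith
  have hu0 := inv_mulVec_nonneg hW0 hP hη
  set u := (potMat W h)⁻¹ *ᵥ singlePin x ε with hu
  have hHu : potMat W h *ᵥ u = singlePin x ε := by
    rw [hu, mulVec_mulVec, mul_nonsing_inv _ ((isUnit_iff_isUnit_det _).1 hP.isUnit), one_mulVec]
  have hz : ∀ i, u i = 0 → singlePin x ε i = 0 ∧ ∀ j, W i j * u j = 0 := by
    intro i hi
    have h1 := congrFun hHu i
    rw [potMat_mulVec, hi, mul_zero, zero_sub] at h1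
    have h2 : 0 ≤ ∑ j, W i j * u j := Finset.sum_nonneg fun j _ => mul_nonneg (hW0 _ _) (hu0 j)
    have h3 := hη i
    refine ⟨by linarith, fun j => ?_⟩
    exact (Finset.sum_eq_zero_iff_of_nonneg fun j _ => mul_nonneg (hW0 i j) (hu0 j)).1
      (by linarith) j (Finset.mem_univ _)
  have hpos : ∀ i, 0 < u i := by
    intro i
    refine (hu0 i).lt_of_ne fun hi => ?_
    have hwalk : ∀ {a b} (_ : G.Walk a b), u a = 0 → u b = 0 := by
      intro a b p
      induction p with
      | nil => exact id
      | @cons a b _ hadj _ ih =>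
        intro ha
        refine ih ?_
        simpa [(hWG _ _ hadj).ne'] using (hz a ha).2 b
    obtain ⟨p⟩ := hG.preconnected i x
    have := (hz x (hwalk p hi.symm)).1
    simp [singlePin, hε.ne'] at this
  refine ⟨fun i => Real.log (u i), potOf_eq_of_mulVec ?_⟩
  simp_rw [Real.exp_log (hpos _)]
  exact hHu

/-- The Jacobian matrix of `potOf` is `-(D⁻¹ H_h D)`. -/
lemma hasFDerivAt_potOf (W : ι → ι → ℝ) (η t : ι → ℝ) :
    HasFDerivAt (potOf W η) (LinearMap.toContinuousLinearMap (Matrix.toLin'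
      (Matrix.of fun i j => -(Real.exp (-t i) * potMat W (potOf W η t) i j * Real.exp (t j))))) t := by
  rw [hasFDerivAt_pi']
  intro i
  have hp : ∀ j, HasFDerivAt (fun t : ι → ℝ => t j)
      (ContinuousLinearMap.proj (R := ℝ) (φ := fun _ : ι => ℝ) j) t := fun j => hasFDerivAt_apply j t
  have h1 := (HasFDerivAt.fun_sum (u := Finset.univ) fun j _ =>
    (((hp j).sub (hp i)).exp.const_mul (W i j))).add (((hp i).neg.exp).const_mul (η i))
  refine h1.congr_fderiv ?_
  ext v
  simp only [_root_.add_apply, _root_.sum_apply,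
    _root_.smul_apply, _root_.sub_apply, _root_.neg_apply,
    ContinuousLinearMap.proj_apply, ContinuousLinearMap.comp_apply, smul_eq_mul,
    Pi.sub_apply, Pi.neg_apply,
    LinearMap.coe_toContinuousLinearMap', toLin'_apply]
  have e1 : (of (fun i j => -(Real.exp (-t i) * potMat W (potOf W η t) i j * Real.exp (t j))) *ᵥ v) i
      = -(Real.exp (-t i) * (potMat W (potOf W η t) *ᵥ fun j => Real.exp (t j) * v j) i) := by
    simp only [mulVec, dotProduct, of_apply, Finset.mul_sum, ← Finset.sum_neg_distrib]
    exact Finset.sum_congr rfl fun j _ => by ring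
  have e2 : Real.exp (-t i) * Real.exp (t i) = 1 := by
    rw [← Real.exp_add, neg_add_cancel, Real.exp_zero]
  have e3 : Real.exp (-t i) * ∑ j, W i j * (Real.exp (t j) * v j) =
      ∑ j, W i j * Real.exp (t j - t i) * v j := by
    rw [Finset.mul_sum]
    refine Finset.sum_congr rfl fun j _ => ?_
    rw [sub_eq_neg_add, Real.exp_add]
    ring
  have e4 : ∑ j, W i j * (Real.exp (t j - t i) * (v j - v i)) =
      ∑ j, W i j * Real.exp (t j - t i) * v j - (∑ j, W i j * Real.exp (t j - t i)) * v i := by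
    rw [Finset.sum_mul, ← Finset.sum_sub_distrib]
    exact Finset.sum_congr rfl fun j _ => by ring
  rw [e1, potMat_mulVec, mul_sub, e3, e4, potOf]
  linear_combination ((∑ j, W i j * Real.exp (t j - t i) + η i * Real.exp (-t i)) * v i) * e2

lemma det_jacobian (W : ι → ι → ℝ) (η t : ι → ℝ) :
    |(LinearMap.toContinuousLinearMap (Matrix.toLin' (Matrix.of fun i j =>
      -(Real.exp (-t i) * potMat W (potOf W η t) i j * Real.exp (t j))))).det| =
      |(potMat W (potOf W η t)).det| := by
  have h1 : (Matrix.of fun i j =>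
      -(Real.exp (-t i) * potMat W (potOf W η t) i j * Real.exp (t j))) =
      -(diagonal (fun i => Real.exp (-t i)) * potMat W (potOf W η t) *
        diagonal (fun i => Real.exp (t i))) := by
    ext i j
    rw [neg_apply, mul_diagonal, diagonal_mul, of_apply]
  rw [ContinuousLinearMap.det, LinearMap.coe_toContinuousLinearMap, LinearMap.det_toLin', h1,
    det_neg, det_mul, det_mul, det_diagonal, det_diagonal, ← Real.exp_sum, ← Real.exp_sum, abs_mul,
    abs_pow, abs_neg, abs_one, one_pow, one_mul, mul_right_comm, ← Real.exp_add,
    Finset.sum_neg_distrib, neg_add_cancel, Real.exp_zero, one_mul]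

/-- The logarithm of the density in the `t` variables, up to the determinant. -/
noncomputable def tExp (W : ι → ι → ℝ) (η t : ι → ℝ) : ℝ :=
  -(1 / 2 * ∑ i, ∑ j, W i j * (Real.cosh (t i - t j) - 1) + ∑ i, η i * (Real.cosh (t i) - 1))

omit [DecidableEq ι] in
lemma tExp_eq (hW : ∀ i j, W i j = W j i) (η t : ι → ℝ) :
    tExp W η t = -(∑ i, potOf W η t i - ∑ i, ∑ j, W i j) / 2 -
      (η ⬝ᵥ fun i => Real.exp (t i)) / 2 + ∑ i, η i := by
  have h1 := sum_sum_symm hW fun i j => Real.exp (t i - t j)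
  have h2 : ∑ i, ∑ j, W i j * (Real.cosh (t i - t j) - 1) =
      (∑ i, ∑ j, W i j * Real.exp (t i - t j) + ∑ i, ∑ j, W i j * Real.exp (t j - t i)) / 2 -
        ∑ i, ∑ j, W i j := by
    simp_rw [← Finset.sum_add_distrib, Finset.sum_div, ← Finset.sum_sub_distrib]
    refine Finset.sum_congr rfl fun i _ => Finset.sum_congr rfl fun j _ => ?_
    rw [Real.cosh_eq, neg_sub]
    ring
  have h3 : ∑ i, η i * (Real.cosh (t i) - 1) =
      (∑ i, η i * Real.exp (-t i) + ∑ i, η i * Real.exp (t i)) / 2 - ∑ i, η i := by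
    simp_rw [← Finset.sum_add_distrib, Finset.sum_div, ← Finset.sum_sub_distrib]
    refine Finset.sum_congr rfl fun i _ => ?_
    rw [Real.cosh_eq]
    ring
  simp only [tExp, potOf, dotProduct, Finset.sum_add_distrib]
  rw [h2, h3, h1]
  ring

/-- The identity `E[e^{t_x}] = 1` for the `t`-marginal, without normalizing constants. -/
theorem lintegral_tExp (hW : ∀ i j, W i j = W j i) (hW0 : ∀ i j, 0 ≤ W i j)
    (hG : G.Connected) (hWG : ∀ i j, G.Adj i j → 0 < W i j) (hε : 0 < ε) :
    ∫⁻ t, ENNReal.ofReal (Real.exp (tExp W (singlePin x ε) t) *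
        √(potMat W (potOf W (singlePin x ε) t)).det * Real.exp (t x)) =
      ENNReal.ofReal √(2 * π) ^ Fintype.card ι := by
  rw [← lintegral_stz_single W hW hW0 x hε, ← range_potOf hW hW0 hG hWG hε, ← Set.image_univ,
    lintegral_image_eq_lintegral_abs_det_fderiv_mul volume MeasurableSet.univ
      (fun t _ => (hasFDerivAt_potOf W (singlePin x ε) t).hasFDerivWithinAt)
      (potOf_injective hW hW0 hG hWG hε).injOn, Measure.restrict_univ]
  refine lintegral_congr fun t => ?_
  have hd := (potMat_potOf_posDef (x := x) hW hW0 hG hWG hε t).det_pos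
  rw [det_jacobian, ← ENNReal.ofReal_mul (abs_nonneg _), abs_of_pos hd, stz,
    inv_mulVec_singlePin hW hW0 hG hWG hε t, ← tExp_eq hW]
  congr 1
  have : √(potMat W (potOf W (singlePin x ε) t)).det ≠ 0 := (Real.sqrt_pos.2 hd).ne'
  field_simp
  rw [Real.sq_sqrt hd.le]

end ChangeOfVariables

end H22

/-! ### The Gibbs weights and the spanning tree weights -/

namespace H22

section Assembly

open Matrix

variable {V : Type*} [Fintype V] [DecidableEq V]

/-- The conductances `β` of the edges of `G`, extended by zero to all pairs of vertices. -/
noncomputable def condW (G : SimpleGraph V) (β : V → V → ℝ) : V → V → ℝ := fun i j =>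
  if G.Adj i j then β i j else 0

omit [Fintype V] [DecidableEq V] in
lemma aug_adj_some (G : SimpleGraph V) (i j : V) :
    (aug G).Adj (some i) (some j) ↔ G.Adj i j := by
  simp only [aug, SimpleGraph.fromRel_adj, ne_eq, Option.some.injEq]
  exact ⟨fun h => h.2.elim id fun h => h.symm, fun h => ⟨h.ne, .inl h⟩⟩

omit [Fintype V] [DecidableEq V] in
lemma aug_adj_none (G : SimpleGraph V) (i : V) : (aug G).Adj (some i) none := by
  simp [aug, SimpleGraph.fromRel_adj]

variable {G : SimpleGraph V} {β : V → V → ℝ}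

omit [Fintype V] [DecidableEq V] in
lemma bres_symm (hβ : ∀ i j, β i j = β j i) (η : V → ℝ) (a b : Option V) :
    bres β η a b = bres β η b a := by
  cases a <;> cases b <;> simp [bres, hβ]

omit [Fintype V] [DecidableEq V] in
lemma Bfun_symm (t s : V → ℝ) (a b : Option V) : Bfun t s a b = Bfun t s b a := by
  rw [Bfun, Bfun, ← Real.cosh_neg, neg_sub, add_comm (extV t a)]
  ring

lemma esym_mk {α : Type*} {f : α → α → ℝ} (hf : ∀ a b, f a b = f b a) (a b : α) :
    esym f s(a, b) = f a b := by
  have h : esym f s(a, b) = (f a b + f b a) / 2 := rfl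
  rw [h, ← hf a b]
  ring

/-- The Gibbs factors split into a function of `t` and a Gaussian weight in `s`. -/
lemma prod_gibbs (hβ : ∀ i j, β i j = β j i) (η t s : V → ℝ) :
    ∏ e ∈ Finset.univ.filter (fun e : Sym2 (Option V) => e ∈ (aug G).edgeSet), gibbs β η t s e =
      Real.exp (tExp (condW G β) η t) *
        Real.exp (-(s ⬝ᵥ (lapOf (condW G β) η t *ᵥ s)) / 2) := by
  have hW : ∀ i j, condW G β i j = condW G β j i := fun i j => by
    simp only [condW, G.adj_comm i j, hβ i j]
  set F : Sym2 (Option V) → ℝ := esym fun a b => bres β η a b * (Bfun t s a b - 1) with hF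
  have hFab : ∀ a b, F s(a, b) = bres β η a b * (Bfun t s a b - 1) := fun a b =>
    esym_mk (fun a b => by rw [bres_symm hβ, Bfun_symm]) a b
  have hg : ∀ e, gibbs β η t s e = Real.exp (-F e) := by
    intro e
    induction e using Sym2.ind with
    | _ a b =>
    rw [hFab, gibbs, esym_mk (fun a b => by rw [bres_symm hβ, Bfun_symm])]
  have h1 := sum_edgeSet (aug G) F
  simp only [Fintype.sum_option, aug_adj_some, aug_adj_none, (aug_adj_none G _).symm, if_true,
    hFab, SimpleGraph.irrefl, if_false] at h1
  rw [Finset.prod_congr rfl fun e _ => hg e, ← Real.exp_sum, ← Real.exp_add,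
    Finset.sum_neg_distrib]
  congr 1
  rw [lapOf_quadratic hW, tExp]
  have h2 : ∀ i, bres β η none (some i) * (Bfun t s none (some i) - 1) =
      η i * (Real.cosh (t i) - 1) + 1 / 2 * (η i * (s i ^ 2 * Real.exp (t i))) := by
    intro i
    simp only [bres, Bfun, extV, Option.elim, zero_sub, zero_add, Real.cosh_neg]
    ring
  have h3 : ∀ i j, (if G.Adj i j then bres β η (some i) (some j) * (Bfun t s (some i) (some j) - 1)
      else 0) = condW G β i j * (Real.cosh (t i - t j) - 1) +
        1 / 2 * (condW G β i j * ((s i - s j) ^ 2 * Real.exp (t i + t j))) := by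
    intro i j
    simp only [bres, Bfun, extV, Option.elim, condW]
    split_ifs <;> ring
  have h4 : ∀ i, bres β η (some i) none * (Bfun t s (some i) none - 1) =
      bres β η none (some i) * (Bfun t s none (some i) - 1) := fun i => by
    rw [bres_symm hβ, Bfun_symm]
  simp only [h4, h2, h3, Finset.sum_add_distrib, ← Finset.mul_sum] at h1
  linarith

/-- The sum of the tree weights is the determinant of the pinned Laplacian. -/
lemma sum_trees (hβ : ∀ i j, β i j = β j i) (η t : V → ℝ) :
    ∑ T ∈ STrees (aug G), ∏ e ∈ T, treeW β η t e = (lapOf (condW G β) η t).det := by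
  set ω : Sym2 (Option V) → ℝ := fun e => if e ∈ (aug G).edgeSet then treeW β η t e else 0 with hω
  have h1 := matrix_tree (aug G) ω fun e he => if_neg he
  have h2 : ∀ T ∈ STrees (aug G), ∏ e ∈ T, treeW β η t e = ∏ e ∈ T, ω e := fun T hT =>
    Finset.prod_congr rfl fun e he => (if_pos ((mem_STrees.1 hT).1 he)).symm
  rw [Finset.sum_congr rfl h2, h1]
  congr 1
  have ht : ∀ a b, treeW β η t s(a, b) = bres β η a b * Real.exp (extV t a + extV t b) :=
    fun a b => esym_mk (fun a b => by rw [bres_symm hβ, add_comm (extV t a)]) a b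
  have h3 : ∀ i j, ω s(some i, some j) = condW G β i j * Real.exp (t i + t j) := by
    intro i j
    simp only [hω, SimpleGraph.mem_edgeSet, aug_adj_some, condW, ht]
    split_ifs <;> simp [bres, extV]
  have h4 : ∀ i, ω s(some i, none) = η i * Real.exp (t i) := by
    intro i
    simp only [hω, SimpleGraph.mem_edgeSet, aug_adj_none, ht, if_true]
    simp [bres, extV]
  ext i j
  have h5 := exp_mul_potOf (condW G β) η t i
  simp only [groundedLap, lapOf, of_apply, Fintype.sum_option, h3, h4, potMat]
  by_cases hij : i = j
  · subst hij
    have h6 : ∑ k, condW G β i k * Real.exp (t i + t k) =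
        Real.exp (t i) * ∑ k, condW G β i k * Real.exp (t k) := by
      rw [Finset.mul_sum]
      exact Finset.sum_congr rfl fun k _ => by rw [Real.exp_add]; ring
    simp only [if_true]
    rw [h6, Real.exp_add]
    linear_combination (-Real.exp (t i)) * h5
  · simp only [hij, if_false, Real.exp_add]
    ring

omit [Fintype V] [DecidableEq V] in
lemma continuous_bfun (a b : Option V) :
    Continuous fun p : (V → ℝ) × (V → ℝ) => Bfun p.1 p.2 a b := by
  have h : ∀ a : Option V, Continuous fun t : V → ℝ => extV t a := by
    intro a
    cases a <;> simp only [extV, Option.elim] <;> fun_prop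
  have h1 := h a
  have h2 := h b
  unfold Bfun
  fun_prop

omit [DecidableEq V] in
lemma continuous_dens (G : SimpleGraph V) (β : V → V → ℝ) (η : V → ℝ)
    (T : Finset (Sym2 (Option V))) :
    Continuous fun p : (V → ℝ) × (V → ℝ) => dens G β η p.1 p.2 T := by
  have h : ∀ a : Option V, Continuous fun t : V → ℝ => extV t a := by
    intro a
    cases a <;> simp only [extV, Option.elim] <;> fun_prop
  unfold dens
  refine (Continuous.mul (by fun_prop) (continuous_finsetProd _ fun e _ => ?_)).mul
    (continuous_finsetProd _ fun e _ => ?_)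
  · induction e using Sym2.ind with
    | _ a b =>
    have h1 := continuous_bfun a b
    have h2 := continuous_bfun b a
    simp only [gibbs, esym, Sym2.lift_mk]
    fun_prop
  · induction e using Sym2.ind with
    | _ a b =>
    have h1 := h a
    have h2 := h b
    simp only [treeW, esym, Sym2.lift_mk]
    fun_prop

lemma dens_nonneg (hβ : ∀ i j, β i j = β j i) (hβpos : ∀ i j, G.Adj i j → 0 < β i j)
    {η : V → ℝ} (hη : ∀ i, 0 ≤ η i) {T : Finset (Sym2 (Option V))} (hT : T ∈ STrees (aug G))
    (t s : V → ℝ) : 0 ≤ dens G β η t s T := by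
  unfold dens
  refine mul_nonneg (mul_nonneg (Finset.prod_nonneg fun j _ => by positivity) ?_)
    (Finset.prod_nonneg fun e he => ?_)
  · rw [prod_gibbs hβ]
    positivity
  · have he' := (mem_STrees.1 hT).1 he
    induction e using Sym2.ind with
    | _ a b =>
    rw [treeW, esym_mk fun a b => by rw [bres_symm hβ, add_comm (extV t a)]]
    refine mul_nonneg ?_ (Real.exp_pos _).le
    rcases a with _ | i <;> rcases b with _ | j
    · exact le_rfl
    · exact hη j
    · exact hη i
    · exact (hβpos i j ((aug_adj_some G i j).1 he')).le

/-- Integrating out the spanning tree and the `s` variables. -/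
lemma lintegral_sum_dens (hG : G.Connected) (hβ : ∀ i j, β i j = β j i)
    (hβpos : ∀ i j, G.Adj i j → 0 < β i j) (x : V) {ε : ℝ} (hε : 0 < ε) (t : V → ℝ) :
    ∫⁻ s, ENNReal.ofReal (∑ T ∈ STrees (aug G), dens G β (singlePin x ε) t s T * Real.exp (t x)) =
      ENNReal.ofReal (√(2 * π) ^ Fintype.card V / (2 * π) ^ Fintype.card V) *
      ENNReal.ofReal (Real.exp (tExp (condW G β) (singlePin x ε) t) *
        √(potMat (condW G β) (potOf (condW G β) (singlePin x ε) t)).det * Real.exp (t x)) := by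
  have hW : ∀ i j, condW G β i j = condW G β j i := fun i j => by
    simp only [condW, G.adj_comm i j, hβ i j]
  have hW0 : ∀ i j, 0 ≤ condW G β i j := fun i j => by
    unfold condW
    split_ifs with h
    exacts [(hβpos i j h).le, le_rfl]
  have hWG : ∀ i j, G.Adj i j → 0 < condW G β i j := fun i j h => by
    rw [condW, if_pos h]
    exact hβpos i j h
  have hL := lapOf_posDef (x := x) hW hW0 hG hWG hε t
  set η := singlePin x ε
  set L := lapOf (condW G β) η t with hLdef
  set H := potMat (condW G β) (potOf (condW G β) η t) with hH
  have h1 : ∀ s, ∑ T ∈ STrees (aug G), dens G β η t s T * Real.exp (t x) =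
      (∏ j, Real.exp (-t j) / (2 * π)) * Real.exp (tExp (condW G β) η t) * L.det * Real.exp (t x) *
        Real.exp (-(s ⬝ᵥ (L *ᵥ s)) / 2) := by
    intro s
    simp only [dens]
    rw [← Finset.sum_mul, ← Finset.mul_sum, sum_trees hβ, prod_gibbs hβ]
    ring
  have hc : 0 ≤ (∏ j, Real.exp (-t j) / (2 * π)) * Real.exp (tExp (condW G β) η t) * L.det *
      Real.exp (t x) :=
    mul_nonneg (mul_nonneg (by positivity) hL.det_pos.le) (Real.exp_pos _).le
  simp_rw [h1, ENNReal.ofReal_mul hc]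
  rw [lintegral_const_mul' _ _ ENNReal.ofReal_ne_top, lintegral_gauss_matrix hL,
    ← ENNReal.ofReal_mul hc, ← ENNReal.ofReal_mul (by positivity)]
  congr 1
  have h2 : √L.det = Real.exp (∑ i, t i) * √H.det := by
    rw [hLdef, det_lapOf, Real.sqrt_mul (by positivity), Real.sqrt_sq (Real.exp_pos _).le]
  have h3 : L.det = √L.det * √L.det := (Real.mul_self_sqrt hL.det_pos.le).symm
  have h4 : ∏ j, Real.exp (-t j) / (2 * π) =
      (Real.exp (∑ i, t i))⁻¹ / (2 * π) ^ Fintype.card V := by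
    rw [Finset.prod_div_distrib, ← Real.exp_sum, Finset.sum_neg_distrib, Real.exp_neg]
    simp [Finset.card_univ]
  have h5 : √L.det ≠ 0 := (Real.sqrt_pos.2 hL.det_pos).ne'
  have h6 : L.det / √L.det = Real.exp (∑ i, t i) * √H.det := by
    rw [← h2]
    exact Real.div_sqrt
  have h7 : (Real.exp (∑ i, t i))⁻¹ * Real.exp (∑ i, t i) = 1 :=
    inv_mul_cancel₀ (Real.exp_pos _).ne'
  calc _ = (Real.exp (∑ i, t i))⁻¹ / (2 * π) ^ Fintype.card V *
        Real.exp (tExp (condW G β) η t) * Real.exp (t x) * √(2 * π) ^ Fintype.card V *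
        (L.det / √L.det) := by rw [h4]; ring
    _ = ((Real.exp (∑ i, t i))⁻¹ * Real.exp (∑ i, t i)) * (√(2 * π) ^ Fintype.card V /
        (2 * π) ^ Fintype.card V * (Real.exp (tExp (condW G β) η t) * √H.det * Real.exp (t x))) := by
      rw [h6]; ring
    _ = _ := by rw [h7, one_mul]

lemma sum_lintegral_dens (hG : G.Connected) (hβ : ∀ i j, β i j = β j i)
    (hβpos : ∀ i j, G.Adj i j → 0 < β i j) (x : V) {ε : ℝ} (hε : 0 < ε) :
    ∑ T ∈ STrees (aug G), ∫⁻ p : (V → ℝ) × (V → ℝ),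
      ENNReal.ofReal (dens G β (singlePin x ε) p.1 p.2 T * Real.exp (p.1 x)) = 1 := by
  have hη : ∀ i, 0 ≤ singlePin x ε i := fun i => by unfold singlePin; split_ifs <;> linarith
  have hm : ∀ T, Measurable fun p : (V → ℝ) × (V → ℝ) =>
      dens G β (singlePin x ε) p.1 p.2 T * Real.exp (p.1 x) := fun T =>
    ((continuous_dens G β _ T).mul (by fun_prop)).measurable
  rw [← lintegral_finsetSum _ fun T _ => (hm T).ennreal_ofReal]
  have h1 : ∀ p : (V → ℝ) × (V → ℝ), ∑ T ∈ STrees (aug G),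
      ENNReal.ofReal (dens G β (singlePin x ε) p.1 p.2 T * Real.exp (p.1 x)) =
      ENNReal.ofReal (∑ T ∈ STrees (aug G),
        dens G β (singlePin x ε) p.1 p.2 T * Real.exp (p.1 x)) := fun p =>
    (ENNReal.ofReal_sum_of_nonneg fun T hT =>
      mul_nonneg (dens_nonneg hβ hβpos hη hT _ _) (Real.exp_pos _).le).symm
  simp_rw [h1]
  rw [Measure.volume_eq_prod, lintegral_prod _
    (Finset.measurable_sum _ fun T _ => hm T).ennreal_ofReal.aemeasurable]
  simp_rw [lintegral_sum_dens hG hβ hβpos x hε]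
  rw [lintegral_const_mul' _ _ ENNReal.ofReal_ne_top, lintegral_tExp (G := G) _ _ hG _ hε,
    ← ENNReal.ofReal_pow (by positivity), ← ENNReal.ofReal_mul (by positivity),
    div_mul_eq_mul_div, ← mul_pow, Real.mul_self_sqrt (by positivity),
    div_self (by positivity), ENNReal.ofReal_one]
  · intro i j
    simp only [condW, G.adj_comm i j, hβ i j]
  · intro i j
    unfold condW
    split_ifs with h
    exacts [(hβpos i j h).le, le_rfl]
  · intro i j h
    rw [condW, if_pos h]
    exact hβpos i j h

end Assembly

end H22

namespace H22

/-- under the single-pinning measure `μ^{ε_xδ_x}` with `ε_x > 0`,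
`E_{μ^{ε_xδ_x}}[e^{t_x}] = 1`. -/
theorem stmt_13 {V : Type*} [Fintype V] [DecidableEq V]
    (G : SimpleGraph V) (hG : G.Connected)
    (β : V → V → ℝ) (hβsymm : ∀ i j, β i j = β j i)
    (hβpos : ∀ i j, G.Adj i j → 0 < β i j)
    (x : V) (εx : ℝ) (hεx : 0 < εx) :
    expect G β (singlePin x εx) (fun t _ _ => Real.exp (t x)) = 1 := by
  have hη : ∀ i, 0 ≤ singlePin x εx i := fun i => by unfold singlePin; split_ifs <;> linarith
  have h1 := sum_lintegral_dens hG hβsymm hβpos x hεx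
  have h2 : ∀ T ∈ STrees (aug G), ∫ p : (V → ℝ) × (V → ℝ),
      dens G β (singlePin x εx) p.1 p.2 T * Real.exp (p.1 x) =
      (∫⁻ p : (V → ℝ) × (V → ℝ),
        ENNReal.ofReal (dens G β (singlePin x εx) p.1 p.2 T * Real.exp (p.1 x))).toReal :=
    fun T hT => integral_eq_lintegral_of_nonneg_ae
      (Eventually.of_forall fun p =>
        mul_nonneg (dens_nonneg hβsymm hβpos hη hT _ _) (Real.exp_pos _).le)
      ((continuous_dens G β _ T).mul (by fun_prop)).aestronglyMeasurable
  rw [expect, Finset.sum_congr rfl h2, ← ENNReal.toReal_sum, h1, ENNReal.toReal_one]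
  -- Each summand is finite because the sum is.
  intro T hT
  exact ENNReal.sum_ne_top.1 (h1 ▸ ENNReal.one_ne_top) T hT

end H22
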